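/- arXiv:1002.2352 — 2 statements merged into one kernel-verified Lean document; each statement's English description precedes it below -/
import Mathlib

section
/- Let A be a 4-dimensional absolute-valued real algebra. Then A satisfies the identity (x², x², x) = 0 (i.e. (x² x²) x = x² (x² x) for all x ∈ A, where x² = xx) if and only if A is isomorphic to ℍ, to *ℍ, or to *ℍ(i,1). -/
/-- The first imaginary unit `i` of the quaternions. -/
def quatI : Quaternion ℝ := ⟨0, 1, 0, 0⟩

section AbsoluteValued

open MeasureTheory

variable {A : Type*} [NormedAddCommGroup A] [NormedSpace ℝ A]

/-- A linear isometry of a finite-dimensional real normed space preserves Haar measure. -/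
theorem measurePreserving_addHaar_of_norm_map [FiniteDimensional ℝ A] [MeasurableSpace A]
    [BorelSpace A] (μ : Measure A) [μ.IsAddHaarMeasure] (f : A →ₗ[ℝ] A)
    (hf : ∀ x, ‖f x‖ = ‖x‖) : MeasurePreserving f μ μ := by
  have hinj : Function.Injective f := (AddMonoidHomClass.isometry_of_norm f hf).injective
  have hdet : LinearMap.det f ≠ 0 := by
    intro h
    exact LinearMap.bot_lt_ker_of_det_eq_zero h |>.ne' (LinearMap.ker_eq_bot.2 hinj)
  have hball : f ⁻¹' Metric.ball 0 1 = Metric.ball 0 1 := by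
    ext z
    simp [hf]
  have hμ := Measure.addHaar_preimage_linearMap μ hdet (Metric.ball (0 : A) 1)
  rw [hball] at hμ
  have hone : ENNReal.ofReal |(LinearMap.det f)⁻¹| = 1 := by
    have hpos : μ (Metric.ball (0 : A) 1) ≠ 0 := (Metric.measure_ball_pos μ 0 one_pos).ne'
    have hfin : μ (Metric.ball (0 : A) 1) ≠ ⊤ := measure_ball_lt_top.ne
    rw [← ENNReal.mul_left_inj hpos hfin, ← hμ, one_mul]
  refine ⟨(LinearMap.continuous_of_finiteDimensional f).measurable, ?_⟩
  rw [Measure.map_linearMap_addHaar_eq_smul_addHaar μ hdet, hone, one_smul]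

/-- The norm of a finite-dimensional absolute-valued algebra satisfies the parallelogram law. -/
theorem parallelogram_law_of_norm_mul [FiniteDimensional ℝ A] (mul : A →ₗ[ℝ] A →ₗ[ℝ] A)
    (habs : ∀ x y : A, ‖mul x y‖ = ‖x‖ * ‖y‖) (x y : A) :
    ‖x + y‖ * ‖x + y‖ + ‖x - y‖ * ‖x - y‖ = 2 * (‖x‖ * ‖x‖ + ‖y‖ * ‖y‖) := by
  rcases subsingleton_or_nontrivial A with hA | hA
  · simp [Subsingleton.elim x 0, Subsingleton.elim y 0]
  borelize A
  let μ : Measure A := Measure.addHaar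
  obtain ⟨v, hv⟩ := exists_ne (0 : A)
  obtain ⟨φ, hφ⟩ := SeparatingDual.exists_ne_zero (R := ℝ) hv
  let B : Set A := Metric.ball 0 1
  let q : A → ℝ := fun w => ∫ z in B, φ (mul w z) ^ 2 ∂μ
  have hintegrable : ∀ f : A → ℝ, Continuous f → IntegrableOn f B μ := fun f hf =>
    (hf.continuousOn.integrableOn_compact (isCompact_closedBall (0 : A) 1)).mono_set
      Metric.ball_subset_closedBall
  have hmul : ∀ w, IntegrableOn (fun z => φ (mul w z) ^ 2) B μ := fun w =>
    hintegrable _ ((φ.continuous.comp (LinearMap.continuous_of_finiteDimensional (mul w))).pow 2)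
  let c : ℝ := ∫ z in B, φ z ^ 2 ∂μ
  have hc : 0 < c := by
    refine (setIntegral_pos_iff_support_of_nonneg_ae (Filter.Eventually.of_forall
      fun z => sq_nonneg (φ z)) (hintegrable _ (by fun_prop))).2 ?_
    have hopen : IsOpen (Function.support (fun z => φ z ^ 2) ∩ B) :=
      (Continuous.isOpen_support (by fun_prop)).inter Metric.isOpen_ball
    refine hopen.measure_pos μ ⟨(2 * ‖v‖)⁻¹ • v, ?_, ?_⟩
    · simp [hφ, hv]
    · have : ‖v‖ ≠ 0 := norm_ne_zero_iff.2 hv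
      simp only [B, mem_ball_zero_iff, norm_smul, norm_inv, norm_mul, norm_norm,
        Real.norm_ofNat, mul_inv]
      rw [mul_assoc, inv_mul_cancel₀ this]
      norm_num
  have hunit : ∀ w, ‖w‖ = 1 → q w = c := by
    intro w hw
    have hf : ∀ z, ‖mul w z‖ = ‖z‖ := fun z => by rw [habs, hw, one_mul]
    have hpre : mul w ⁻¹' B = B := by
      ext z
      simp [B, hf]
    have hemb : MeasurableEmbedding (mul w) :=
      (LinearMap.isClosedEmbedding_of_injective (LinearMap.ker_eq_bot.2
        (AddMonoidHomClass.isometry_of_norm (mul w) hf).injective)).measurableEmbedding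
    have := (measurePreserving_addHaar_of_norm_map μ (mul w) hf).setIntegral_preimage_emb hemb
      (fun z => φ z ^ 2) B
    rwa [hpre] at this
  have hq : ∀ w, q w = ‖w‖ * ‖w‖ * c := by
    intro w
    rcases eq_or_ne w 0 with rfl | hw
    · simp [q]
    have hn : ‖w‖ ≠ 0 := norm_ne_zero_iff.2 hw
    rw [← hunit (‖w‖⁻¹ • w) (by rw [norm_smul, norm_inv, norm_norm, inv_mul_cancel₀ hn])]
    simp only [q, ← integral_const_mul]
    congr 1 with z
    simp only [map_smul, LinearMap.smul_apply, smul_eq_mul]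
    field_simp
  have hpar : q (x + y) + q (x - y) = 2 * (q x + q y) := by
    simp only [q]
    rw [← integral_add (hmul _) (hmul _), ← integral_add (hmul _) (hmul _),
      ← integral_const_mul]
    congr 1 with z
    simp only [map_add, map_sub, LinearMap.add_apply, LinearMap.sub_apply]
    ring
  rw [hq, hq, hq, hq] at hpar
  exact mul_right_cancel₀ hc.ne' (by linear_combination hpar)

end AbsoluteValued

section CompositionAlgebra

open scoped RealInnerProductSpace

variable {V : Type*} [NormedAddCommGroup V] [InnerProductSpace ℝ V]

theorem inner_mul_add_inner_mul (N : V →ₗ[ℝ] V →ₗ[ℝ] V)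
    (hN : ∀ x y : V, ‖N x y‖ = ‖x‖ * ‖y‖) (x w y z : V) :
    ⟪N x y, N w z⟫ + ⟪N w y, N x z⟫ = 2 * ⟪x, w⟫ * ⟪y, z⟫ := by
  have hsq : ∀ x y : V, ⟪N x y, N x y⟫ = ⟪x, x⟫ * ⟪y, y⟫ := fun x y => by
    simp only [real_inner_self_eq_norm_sq, hN, mul_pow]
  have h₁ := hsq (x + w) (y + z)
  have h₂ := hsq (x + w) y
  have h₃ := hsq (x + w) z
  have h₄ := hsq x (y + z)
  have h₅ := hsq w (y + z)
  simp only [map_add, LinearMap.add_apply, inner_add_left, inner_add_right] at h₁ h₂ h₃ h₄ h₅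
  have hx := hsq x y
  have hx' := hsq x z
  have hw := hsq w y
  have hw' := hsq w z
  simp only [real_inner_comm (N x y) (N x z), real_inner_comm (N x y) (N w y),
    real_inner_comm (N x y) (N w z), real_inner_comm (N x z) (N w z),
    real_inner_comm (N w y) (N x z), real_inner_comm (N w y) (N w z), real_inner_comm x w,
    real_inner_comm y z] at h₁ h₂ h₃ h₄ h₅ ⊢
  linarith

theorem mul_mul_self_left (N : V →ₗ[ℝ] V →ₗ[ℝ] V) (hN : ∀ x y : V, ‖N x y‖ = ‖x‖ * ‖y‖)
    {e : V} (hl : ∀ x, N e x = x) {x : V} (hx : ⟪x, e⟫ = 0) (y : V) :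
    N x (N x y) = -(⟪x, x⟫ • y) := by
  refine ext_inner_right ℝ fun z => ?_
  have h₁ := inner_mul_add_inner_mul N hN x e (N x y) z
  have h₂ := inner_mul_add_inner_mul N hN x x y z
  rw [hl, hl, hx] at h₁
  rw [inner_neg_left, real_inner_smul_left]
  linarith

theorem mul_mul_self_right (N : V →ₗ[ℝ] V →ₗ[ℝ] V) (hN : ∀ x y : V, ‖N x y‖ = ‖x‖ * ‖y‖)
    {e : V} (hr : ∀ x, N x e = x) {x : V} (hx : ⟪x, e⟫ = 0) (y : V) :
    N (N y x) x = -(⟪x, x⟫ • y) :=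
  mul_mul_self_left N.flip (fun a b => by rw [LinearMap.flip_apply, hN, mul_comm]) hr hx y

/-- **The Hurwitz theorem in dimension four**: a unital composition algebra of dimension four with
positive definite norm is isometrically isomorphic to the quaternions. -/
theorem exists_linearIsometryEquiv_quaternion (hdim : Module.finrank ℝ V = 4)
    (N : V →ₗ[ℝ] V →ₗ[ℝ] V) (hN : ∀ x y : V, ‖N x y‖ = ‖x‖ * ‖y‖) {e : V} (he : ‖e‖ = 1)
    (hl : ∀ x, N e x = x) (hr : ∀ x, N x e = x) :
    ∃ φ : V ≃ₗᵢ[ℝ] Quaternion ℝ, ∀ x y, φ (N x y) = φ x * φ y := by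
  classical
  have : FiniteDimensional ℝ V := .of_finrank_pos (by omega)
  obtain ⟨i, j, hii, hjj, hie, hje, hji⟩ : ∃ i j : V, ⟪i, i⟫ = 1 ∧ ⟪j, j⟫ = 1 ∧ ⟪i, e⟫ = 0 ∧
      ⟪j, e⟫ = 0 ∧ ⟪j, i⟫ = 0 := by
    have : Orthonormal ℝ (Subtype.val : ({e} : Set V) → V) := by
      rw [orthonormal_subtype_iff_ite]
      simp [he]
    obtain ⟨u, b, hu, hb⟩ := this.exists_orthonormalBasis_extension
    have hcard : u.card = 4 := by
      rw [← hdim, Module.finrank_eq_card_basis b.toBasis, Fintype.card_coe]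
    have heu : e ∈ u := by simpa using hu
    obtain ⟨i, j, hi, hj, hij⟩ := Finset.one_lt_card_iff.1
      (show 1 < (u.erase e).card by rw [Finset.card_erase_of_mem heu]; omega)
    rw [Finset.mem_erase] at hi hj
    have ho : ∀ v ∈ u, ∀ w ∈ u, ⟪v, w⟫ = if v = w then (1 : ℝ) else 0 := by
      have := b.orthonormal
      rw [hb] at this
      exact (orthonormal_subtype_iff_ite (s := (u : Set V))).1 this
    refine ⟨i, j, ?_, ?_, ?_, ?_, ?_⟩
    · rw [ho i hi.2 i hi.2, if_pos rfl]
    · rw [ho j hj.2 j hj.2, if_pos rfl]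
    · simp [ho i hi.2 e heu, hi.1]
    · simp [ho j hj.2 e heu, hj.1]
    · simp [ho j hj.2 i hi.2, hij.symm]
  have hee : ⟪e, e⟫ = (1 : ℝ) := by simp [he]
  have hpolar := inner_mul_add_inner_mul N hN
  have hanti : ∀ {x y : V}, ⟪x, e⟫ = 0 → ⟪y, e⟫ = 0 → ⟪x, y⟫ = 0 → N x y = -N y x := by
    intro x y hx hy hxy
    have hsum := mul_mul_self_left N hN hl (x := x + y) (by rw [inner_add_left, hx, hy, add_zero]) e
    have hx' := mul_mul_self_left N hN hl hx e
    have hy' := mul_mul_self_left N hN hl hy e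
    simp only [hr, map_add, LinearMap.add_apply, inner_add_left, inner_add_right,
      hxy, zero_add, add_zero, add_smul, real_inner_comm x y] at hsum hx' hy'
    rw [eq_neg_iff_add_eq_zero]
    rw [hx', hy', ← sub_eq_zero] at hsum
    rw [← hsum]
    abel
  obtain ⟨k, hk⟩ : ∃ k, k = N i j := ⟨_, rfl⟩
  have hij : ⟪i, j⟫ = 0 := by rw [real_inner_comm, hji]
  have hke : ⟪k, e⟫ = 0 := by
    have := hpolar i e j e
    rw [hl, hl, hr, hie] at this
    rw [hk]
    linarith
  have hki : ⟪k, i⟫ = 0 := by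
    have := hpolar i i j e
    rw [hr, hje] at this
    rw [hk]
    linarith
  have hkj : ⟪k, j⟫ = 0 := by
    have := hpolar i e j j
    rw [hl, hie] at this
    rw [hk, real_inner_comm j]
    linarith [real_inner_comm j (N i j)]
  have hkk : ⟪k, k⟫ = (1 : ℝ) := by
    have := hpolar i i j j
    rw [hii, hjj] at this
    rw [hk]
    linarith
  have hNii : N i i = -e := by
    simpa only [hr, hii, one_smul] using mul_mul_self_left N hN hl hie e
  have hNjj : N j j = -e := by
    simpa only [hr, hjj, one_smul] using mul_mul_self_left N hN hl hje e
  have hNkk : N k k = -e := by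
    simpa only [hr, hkk, one_smul] using mul_mul_self_left N hN hl hke e
  have hNik : N i k = -j := by
    simpa only [hk, hii, one_smul] using mul_mul_self_left N hN hl hie j
  have hNkj : N k j = -i := by
    simpa only [hk, hjj, one_smul] using mul_mul_self_right N hN hr hje i
  have hNji : N j i = -k := by rw [hanti hje hie hji, hk]
  have hNki : N k i = j := by rw [hanti hke hie hki, hNik, neg_neg]
  have hNjk : N j k = i := by
    rw [hanti hje hke (by rw [real_inner_comm, hkj]), hNkj, neg_neg]
  let ψ : Quaternion ℝ →ₗ[ℝ] V :=
    { toFun := fun q => q.re • e + q.imI • i + q.imJ • j + q.imK • k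
      map_add' := fun p q => by
        simp only [Quaternion.re_add, Quaternion.imI_add, Quaternion.imJ_add, Quaternion.imK_add]
        module
      map_smul' := fun r q => by
        simp only [Quaternion.re_smul, Quaternion.imI_smul, Quaternion.imJ_smul,
          Quaternion.imK_smul, RingHom.id_apply, smul_eq_mul]
        module }
  have hψ : ∀ q, ψ q = q.re • e + q.imI • i + q.imJ • j + q.imK • k := fun _ => rfl
  have hnorm : ∀ q, ‖ψ q‖ = ‖q‖ := by
    intro q
    rw [← sq_eq_sq₀ (norm_nonneg _) (norm_nonneg _), sq ‖q‖, ← Quaternion.normSq_eq_norm_mul_self,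
      Quaternion.normSq_def', ← real_inner_self_eq_norm_sq, hψ]
    simp only [inner_add_left, inner_add_right, real_inner_smul_left, real_inner_smul_right, hee,
      hii, hjj, hkk, hie, hje, hke, hji, hki, hkj, hij, real_inner_comm i e, real_inner_comm j e,
      real_inner_comm k e, real_inner_comm k i, real_inner_comm k j]
    ring
  have hmul : ∀ p q, ψ (p * q) = N (ψ p) (ψ q) := by
    intro p q
    simp only [hψ, map_add, map_smul, LinearMap.add_apply, LinearMap.smul_apply, hl, hr, hNii,
      hNjj, hNkk, hNik, hNkj, hNji, hNki, hNjk, ← hk, Quaternion.re_mul, Quaternion.imI_mul,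
      Quaternion.imJ_mul, Quaternion.imK_mul]
    module
  let φ : Quaternion ℝ ≃ₗᵢ[ℝ] V := LinearIsometry.toLinearIsometryEquiv ⟨ψ, hnorm⟩
    (by rw [hdim, Quaternion.finrank_eq_four])
  refine ⟨φ.symm, fun x y => φ.injective ?_⟩
  have h : ∀ q, φ q = ψ q := fun _ => rfl
  rw [φ.apply_symm_apply, h, hmul, ← h, ← h, φ.apply_symm_apply, φ.apply_symm_apply]

/-- A four-dimensional Euclidean absolute-valued algebra is isotopic to the quaternions. -/
theorem exists_isotopy_quaternion_of_inner (hdim : Module.finrank ℝ V = 4)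
    (mul : V →ₗ[ℝ] V →ₗ[ℝ] V) (habs : ∀ x y : V, ‖mul x y‖ = ‖x‖ * ‖y‖) :
    ∃ (e : V ≃ₗ[ℝ] Quaternion ℝ) (F G : Quaternion ℝ ≃ₗᵢ[ℝ] Quaternion ℝ),
      ∀ x y, e (mul x y) = F (e x) * G (e y) := by
  have : FiniteDimensional ℝ V := .of_finrank_pos (by omega)
  have : Nontrivial V := Module.nontrivial_of_finrank_pos (R := ℝ) (by omega)
  obtain ⟨a, ha⟩ := exists_norm_eq V zero_le_one
  let L : V ≃ₗᵢ[ℝ] V := LinearIsometry.toLinearIsometryEquiv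
    ⟨mul a, fun x => by rw [habs, ha, one_mul]⟩ rfl
  let R : V ≃ₗᵢ[ℝ] V := LinearIsometry.toLinearIsometryEquiv
    ⟨mul.flip a, fun x => by rw [LinearMap.flip_apply, habs, ha, mul_one]⟩ rfl
  have hL : ∀ x, L x = mul a x := fun _ => rfl
  have hR : ∀ x, R x = mul x a := fun _ => rfl
  let N : V →ₗ[ℝ] V →ₗ[ℝ] V :=
    mul.compl₁₂ R.symm.toLinearEquiv.toLinearMap L.symm.toLinearEquiv.toLinearMap
  have hN : ∀ x y, N x y = mul (R.symm x) (L.symm y) := fun _ _ => rfl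
  obtain ⟨φ, hφ⟩ := exists_linearIsometryEquiv_quaternion hdim N
    (fun x y => by rw [hN, habs, R.symm.norm_map, L.symm.norm_map]) (e := mul a a)
    (by rw [habs, ha, one_mul])
    (fun x => by rw [hN, ← hR, R.symm_apply_apply, ← hL, L.apply_symm_apply])
    (fun x => by rw [hN, ← hL, L.symm_apply_apply, ← hR, R.apply_symm_apply])
  refine ⟨φ.toLinearEquiv, (φ.symm.trans R).trans φ, (φ.symm.trans L).trans φ, fun x y => ?_⟩
  simp [← hφ, hN]

end CompositionAlgebra

/-- A four-dimensional absolute-valued algebra is isotopic to the quaternions. -/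
theorem exists_isotopy_quaternion {A : Type*} [NormedAddCommGroup A] [NormedSpace ℝ A]
    (hdim : Module.finrank ℝ A = 4) (mul : A →ₗ[ℝ] A →ₗ[ℝ] A)
    (habs : ∀ x y : A, ‖mul x y‖ = ‖x‖ * ‖y‖) :
    ∃ (e : A ≃ₗ[ℝ] Quaternion ℝ) (F G : Quaternion ℝ ≃ₗᵢ[ℝ] Quaternion ℝ),
      ∀ x y, e (mul x y) = F (e x) * G (e y) := by
  have : FiniteDimensional ℝ A := .of_finrank_pos (by omega)
  let : InnerProductSpace ℝ A :=
    InnerProductSpace.ofNorm (𝕜 := ℝ) (parallelogram_law_of_norm_mul mul habs)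
  exact exists_isotopy_quaternion_of_inner hdim mul habs

section Isometries

open Quaternion

/-- Every linear isometry of the quaternions is `x ↦ a x b` or `x ↦ a x̄ b` with `a`, `b` unit
quaternions. -/
theorem exists_unitary_of_linearIsometryEquiv (φ : ℍ ≃ₗᵢ[ℝ] ℍ) :
    ∃ a b : unitary ℍ, (∀ x, φ x = a * x * b) ∨ ∀ x, φ x = a * star x * b := by
  have hmem : φ ∈ Subgroup.closure (Set.range fun v : ℍ => (ℝ ∙ v)ᗮ.reflection) := by
    rw [LinearIsometryEquiv.reflections_generate]
    trivial
  induction hmem using Subgroup.closure_induction with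
  | mem φ hφ =>
    obtain ⟨v, rfl⟩ := hφ
    rcases eq_or_ne v 0 with rfl | hv
    · refine ⟨1, 1, .inl fun x => ?_⟩
      rw [Submodule.reflection_mem_subspace_eq_self (by simp)]
      simp
    have hn : ‖v‖ ≠ 0 := norm_ne_zero_iff.2 hv
    have hsq : v.re ^ 2 + v.imI ^ 2 + v.imJ ^ 2 + v.imK ^ 2 = ‖v‖ ^ 2 := by
      rw [← normSq_def', normSq_eq_norm_mul_self, sq]
    let u : unitary ℍ := ⟨‖v‖⁻¹ • v, by
      have h : normSq (‖v‖⁻¹ • v) = 1 := by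
        rw [normSq_eq_norm_mul_self, norm_smul, norm_inv, norm_norm, inv_mul_cancel₀ hn, mul_one]
      rw [Unitary.mem_iff, star_mul_self, self_mul_star, h]
      simp⟩
    refine ⟨-u, u, .inr fun x => ?_⟩
    simp only [Submodule.reflection_orthogonal_apply, Submodule.reflection_singleton_apply, u,
      two_smul,      Unitary.coe_neg, inner_def]
    ext <;> simp <;> field_simp <;> rw [← hsq] <;> ring
  | one => exact ⟨1, 1, .inl fun x => by simp⟩
  | mul φ ψ _ _ hφ hψ =>
    obtain ⟨a, b, hφ⟩ := hφ
    obtain ⟨c, d, hψ⟩ := hψ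
    rcases hφ with hφ | hφ <;> rcases hψ with hψ | hψ
    · exact ⟨a * c, d * b, .inl fun x => by simp [hφ, hψ, mul_assoc]⟩
    · exact ⟨a * c, d * b, .inr fun x => by simp [hφ, hψ, mul_assoc]⟩
    · exact ⟨a * star d, star c * b, .inr fun x => by simp [hφ, hψ, mul_assoc]⟩
    · exact ⟨a * star d, star c * b, .inl fun x => by simp [hφ, hψ, mul_assoc]⟩
  | inv φ _ hφ =>
    obtain ⟨a, b, hφ | hφ⟩ := hφ
    · refine ⟨star a, star b, .inl fun x => φ.injective ?_⟩
      rw [show φ (φ⁻¹ x) = x from φ.apply_symm_apply x, hφ]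
      simp [mul_assoc, ← mul_assoc (a : ℍ)]
    · refine ⟨b, a, .inr fun x => φ.injective ?_⟩
      rw [show φ (φ⁻¹ x) = x from φ.apply_symm_apply x, hφ]
      simp [mul_assoc, ← mul_assoc (a : ℍ)]

end Isometries

section UnitQuaternions

open Quaternion

theorem Quaternion.mem_unitary_iff_normSq {q : ℍ} : q ∈ unitary ℍ ↔ normSq q = 1 := by
  rw [Unitary.mem_iff, star_mul_self, self_mul_star, and_self, ← coe_one, coe_inj]

theorem Quaternion.re_mul_comm (p q : ℍ) : (p * q).re = (q * p).re := by
  rw [re_mul, re_mul]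
  ring

/-- The quaternion with the given components. -/
def mkQuat (a b c d : ℝ) : ℍ := ⟨a, b, c, d⟩

@[simp] theorem re_mkQuat (a b c d : ℝ) : (mkQuat a b c d).re = a := rfl

@[simp] theorem imI_mkQuat (a b c d : ℝ) : (mkQuat a b c d).imI = b := rfl

@[simp] theorem imJ_mkQuat (a b c d : ℝ) : (mkQuat a b c d).imJ = c := rfl

@[simp] theorem imK_mkQuat (a b c d : ℝ) : (mkQuat a b c d).imK = d := rfl

/-- The unit quaternion `i`. -/
def unitI : unitary ℍ := ⟨mkQuat 0 1 0 0, by simp [mem_unitary_iff_normSq, normSq_def']⟩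

/-- The unit quaternion `j`. -/
def unitJ : unitary ℍ := ⟨mkQuat 0 0 1 0, by simp [mem_unitary_iff_normSq, normSq_def']⟩

theorem coe_unitI : (unitI : ℍ) = mkQuat 0 1 0 0 := rfl

theorem coe_unitJ : (unitJ : ℍ) = mkQuat 0 0 1 0 := rfl

theorem inv_sqrt_two_mul_self : (√2)⁻¹ * (√2)⁻¹ = (1 / 2 : ℝ) := by
  rw [← mul_inv, Real.mul_self_sqrt zero_le_two, one_div]

/-- The square root `(1 + i) / √2` of `i`. -/
noncomputable def sqrtI : unitary ℍ := ⟨mkQuat (√2)⁻¹ (√2)⁻¹ 0 0, by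
  simp only [mem_unitary_iff_normSq, normSq_def', re_mkQuat, imI_mkQuat, imJ_mkQuat, imK_mkQuat,
    sq, inv_sqrt_two_mul_self]
  norm_num⟩

/-- The square root `(1 + j) / √2` of `j`. -/
noncomputable def sqrtJ : unitary ℍ := ⟨mkQuat (√2)⁻¹ 0 (√2)⁻¹ 0, by
  simp only [mem_unitary_iff_normSq, normSq_def', re_mkQuat, imI_mkQuat, imJ_mkQuat, imK_mkQuat,
    sq, inv_sqrt_two_mul_self]
  norm_num⟩

theorem coe_sqrtI : (sqrtI : ℍ) = mkQuat (√2)⁻¹ (√2)⁻¹ 0 0 := rfl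

theorem coe_sqrtJ : (sqrtJ : ℍ) = mkQuat (√2)⁻¹ 0 (√2)⁻¹ 0 := rfl

theorem sqrtI_mul_self : sqrtI * sqrtI = unitI := by
  apply Subtype.ext
  rw [(unitary ℍ).coe_mul, coe_sqrtI, coe_unitI]
  ext <;> simp [inv_sqrt_two_mul_self]
  norm_num

theorem sqrtJ_mul_self : sqrtJ * sqrtJ = unitJ := by
  apply Subtype.ext
  rw [(unitary ℍ).coe_mul, coe_sqrtJ, coe_unitJ]
  ext <;> simp [inv_sqrt_two_mul_self]
  norm_num

theorem unitI_mul_self : unitI * unitI = -1 := by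
  apply Subtype.ext
  rw [(unitary ℍ).coe_mul, coe_unitI, Unitary.coe_neg]
  ext <;> simp

theorem unitJ_mul_self : unitJ * unitJ = -1 := by
  apply Subtype.ext
  rw [(unitary ℍ).coe_mul, coe_unitJ, Unitary.coe_neg]
  ext <;> simp

theorem unitJ_mul_unitI : unitJ * unitI = -(unitI * unitJ) := by
  apply Subtype.ext
  rw [(unitary ℍ).coe_mul, Unitary.coe_neg, (unitary ℍ).coe_mul, coe_unitI, coe_unitJ]
  ext <;> simp

theorem unitary_ne_neg (u : unitary ℍ) : u ≠ -u := by
  intro h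
  have h' := congrArg (fun z : unitary ℍ => (z : ℍ)) h
  have hu : (u : ℍ) = 0 := by
    have := add_eq_zero_iff_eq_neg.2 h'
    rwa [← two_smul ℝ, smul_eq_zero_iff_right two_ne_zero] at this
  have := Unitary.coe_star_mul_self u
  rw [hu] at this
  simp at this

theorem eq_one_or_neg_one_of_mul_self {q : unitary ℍ} (h : q * q = 1) : q = 1 ∨ q = -1 := by
  have h' := congrArg (fun z : unitary ℍ => (z : ℍ)) h
  rcases mul_self_eq_one_iff.1 h' with h | h
  · exact .inl (Subtype.ext h)
  · exact .inr (Subtype.ext h)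

theorem eq_one_or_neg_one_of_commute {b : unitary ℍ} (hi : b * unitI = unitI * b)
    (hj : b * unitJ = unitJ * b) : b = 1 ∨ b = -1 := by
  have hi' := congrArg (fun z : unitary ℍ => (z : ℍ)) hi
  have hj' := congrArg (fun z : unitary ℍ => (z : ℍ)) hj
  simp only [(unitary ℍ).coe_mul, coe_unitI, coe_unitJ, Quaternion.ext_iff, re_mul, imI_mul,
    imJ_mul, imK_mul, re_mkQuat, imI_mkQuat, imJ_mkQuat, imK_mkQuat] at hi' hj'
  have h₁ : (b : ℍ).imI = 0 := by linarith [hj'.2.2.2]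
  have h₂ : (b : ℍ).imJ = 0 := by linarith [hi'.2.2.2]
  have h₃ : (b : ℍ).imK = 0 := by linarith [hi'.2.2.1]
  have hn := mem_unitary_iff_normSq.1 b.2
  rw [normSq_def', h₁, h₂, h₃] at hn
  rcases sq_eq_one_iff.1 (by linarith : (b : ℍ).re ^ 2 = 1) with h | h
  · exact .inl (Subtype.ext (by ext <;> simp [*]))
  · exact .inr (Subtype.ext (by ext <;> simp [*, Unitary.coe_neg]))

end UnitQuaternions

section GroupIdentities

/-- The identity `(x², x², x) = 0` for a binary operation. -/
def SquareAssociative {G : Type*} (op : G → G → G) : Prop :=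
  ∀ x, op (op (op x x) (op x x)) x = op (op x x) (op (op x x) x)

open Quaternion

variable {a b : unitary ℍ}

theorem SquareAssociative.eq_of_mul_mul
    (h : SquareAssociative fun x y : unitary ℍ => a * x * y * b) :
    (a = 1 ∨ a = -1) ∧ (b = 1 ∨ b = -1) := by
  simp only [SquareAssociative] at h
  have hab : a * b = b * a := by
    have h₁ := h 1
    simp only [mul_one] at h₁
    rw [show a * b = (a * a)⁻¹ * (a * (a * (a * b) * (a * b) * b) * b) * (a * b * b * b)⁻¹ by group,
      h₁]
    group
  have haba : a * b * a = b * a * a := by rw [hab]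
  have hcomm : ∀ x : unitary ℍ, x * x = -1 → b * x = x * b := by
    intro x hx
    have hs : a * x * x * b = -(a * b) := by
      rw [mul_assoc a, hx, mul_neg, mul_one, neg_mul]
    have h₁ := h x
    simp only [hs, neg_mul, mul_neg, neg_neg] at h₁
    rw [show b * x = (a * a * (a * b * a) * b)⁻¹ *
      (a * (a * (a * b) * (a * b) * b) * x * b) * b⁻¹ by group, h₁, haba]
    group
  have hb := eq_one_or_neg_one_of_commute (hcomm _ unitI_mul_self) (hcomm _ unitJ_mul_self)
  have ha : ∀ x : unitary ℍ, a * (x * x) = x * x * a := by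
    intro x
    have h₁ := h x
    have h₂ : a * (a * (a * x * x) * (a * x * x)) * x = a * (a * x * x) * (a * (a * x * x) * x) := by
      rcases hb with rfl | rfl <;> simpa using h₁
    rw [show a * (x * x) = (a * a)⁻¹ * (a * (a * (a * x * x) * (a * x * x)) * x) *
      (a * x * x * x)⁻¹ by group, h₂]
    group
  have hi := ha sqrtI
  have hj := ha sqrtJ
  rw [sqrtI_mul_self] at hi
  rw [sqrtJ_mul_self] at hj
  exact ⟨eq_one_or_neg_one_of_commute hi hj, hb⟩

theorem not_squareAssociative_mul_inv :
    ¬SquareAssociative fun x y : unitary ℍ => a * x * b * y⁻¹ := by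
  intro h
  simp only [SquareAssociative] at h
  have h₁ : a * b * a⁻¹ * b = (a * a)⁻¹ := by
    rw [show a * b * a⁻¹ * b = (a * a)⁻¹ * (a * (a * (a * 1 * b * 1⁻¹) * b * (a * 1 * b * 1⁻¹)⁻¹) *
      b * 1⁻¹) by group, h 1]
    group
  obtain ⟨q, hq⟩ : ∃ q, q = (a * a)⁻¹ := ⟨_, rfl⟩
  have hb : q * b * q⁻¹ = b⁻¹ := by
    have h₂ : a * b * a⁻¹ = b * (a * a)⁻¹ := by
      rw [show a * b * a⁻¹ = (a * a)⁻¹ * (a * (a * (a * b * b * b⁻¹) * b * (a * b * b * b⁻¹)⁻¹) *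
        b * b⁻¹) by group, h b]
      group
    rw [h₂, ← hq, mul_assoc] at h₁
    rw [show q * b * q⁻¹ = b⁻¹ * (b * (q * b)) * q⁻¹ by group, h₁]
    group
  have hqq : q * q = 1 := by
    have h₂ := h q
    rw [show a * q * b * q⁻¹ = a * b⁻¹ by rw [← hb]; group] at h₂
    rw [show a * (a * (a * b⁻¹) * b * (a * b⁻¹)⁻¹) * b * q⁻¹ = a * a * (a * b * a⁻¹ * b) * q⁻¹ by
      group, h₁, show a * (a * b⁻¹) * b * (a * (a * b⁻¹) * b * q⁻¹)⁻¹ = (a * a) * q * (a * a)⁻¹ by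
      group, ← hq, show a * a = q⁻¹ by rw [hq, inv_inv]] at h₂
    have hinv : q⁻¹ = q := by simpa using h₂
    nth_rw 1 [← hinv]
    exact inv_mul_cancel q
  have hbb : b * b = 1 := by
    have hcen : q * b * q⁻¹ = b := by
      rcases eq_one_or_neg_one_of_mul_self hqq with h | h <;> simp [h]
    rw [hcen] at hb
    nth_rw 1 [hb]
    group
  have hx := h unitI
  have hI : unitI⁻¹ = unitI := by
    have haa : a * a = 1 := by
      rw [← inv_inj, ← h₁]
      rcases eq_one_or_neg_one_of_mul_self hbb with rfl | rfl <;> simp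
    have h₃ : a * (a * a * a⁻¹) * unitI⁻¹ = a * a * (a * a * unitI⁻¹)⁻¹ := by
      rcases eq_one_or_neg_one_of_mul_self hbb with rfl | rfl <;> simpa using hx
    rw [haa] at h₃
    simpa using h₃
  have h₂ := unitI_mul_self
  nth_rw 1 [← hI] at h₂
  rw [inv_mul_cancel] at h₂
  exact unitary_ne_neg 1 h₂

theorem not_squareAssociative_inv_inv :
    ¬SquareAssociative fun x y : unitary ℍ => a * x⁻¹ * y⁻¹ * b := by
  intro h
  simp only [SquareAssociative] at h
  have h₁ : a * b = a⁻¹ * b⁻¹ := by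
    rw [show a * b = (a * b⁻¹)⁻¹ * (a * (a * (a * 1⁻¹ * 1⁻¹ * b)⁻¹ * (a * 1⁻¹ * 1⁻¹ * b)⁻¹ * b)⁻¹ *
      1⁻¹ * b) * (a * b * a⁻¹ * b)⁻¹ by group, h 1]
    group
  have hanti : ∀ x : unitary ℍ, x * x = -1 → a * b * a⁻¹ * x = -(x * (a * b * a⁻¹)) := by
    intro x hx
    have hinv : x⁻¹ = -x := by
      rw [inv_eq_iff_mul_eq_one, mul_neg, hx, neg_neg]
    have hs : a * x⁻¹ * x⁻¹ * b = -(a * b) := by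
      rw [mul_assoc a, hinv, neg_mul_neg, hx, mul_neg, mul_one, neg_mul]
    have h₂ := h x
    simp only [hs, inv_neg, neg_mul, mul_neg, neg_neg] at h₂
    have h₃ : a * b⁻¹ * (a * b) * (a * b * a⁻¹ * x⁻¹) * b =
        a * b⁻¹ * (a * b) * (x * (a * b * a⁻¹)) * b := by
      calc _ = a * (a * (a * b)⁻¹ * (a * b)⁻¹ * b)⁻¹ * x⁻¹ * b := by group
        _ = a * b⁻¹ * (a⁻¹ * b⁻¹) * (x * (a * b * a⁻¹)) * b := by rw [h₂]; group
        _ = _ := by rw [← h₁]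
    rw [← mul_left_cancel (mul_right_cancel h₃), hinv, mul_neg, neg_neg]
  have hi := hanti _ unitI_mul_self
  have hj := hanti _ unitJ_mul_self
  have hk := hanti (unitI * unitJ) (by
    rw [mul_assoc, ← mul_assoc unitJ, unitJ_mul_unitI, neg_mul, mul_assoc, unitJ_mul_self, mul_neg,
      ← mul_assoc, unitI_mul_self, neg_one_mul, neg_neg])
  rw [← mul_assoc, hi, neg_mul, mul_assoc unitI, hj, mul_neg, neg_neg, mul_assoc unitI] at hk
  exact unitary_ne_neg _ hk

theorem SquareAssociative.commute_of_inv_mul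
    (h : SquareAssociative fun x y : unitary ℍ => x⁻¹ * a * y * b) : a * b = b * a := by
  simp only [SquareAssociative] at h
  have h₁ : (b * b)⁻¹ * a⁻¹ * (a * b) * b = (b * b)⁻¹ * a⁻¹ * (b * a) * b := by
    calc _ = (1⁻¹ * a * 1 * b)⁻¹ * a * ((1⁻¹ * a * 1 * b)⁻¹ * a * 1 * b) * b := by group
      _ = _ := by rw [← h 1]; group
  exact mul_left_cancel (mul_right_cancel h₁)

theorem SquareAssociative.eq_of_inv_mul_of_central (ha : a = 1 ∨ a = -1)
    (h : SquareAssociative fun x y : unitary ℍ => x⁻¹ * a * y * b) : b = 1 ∨ b = -1 := by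
  have hcomm : ∀ x, b * x = x * b := by
    intro x
    have h₁ : (b⁻¹ * b * b)⁻¹ * x * b = b⁻¹ * (b⁻¹ * x * b) * b := by
      have := h x
      rcases ha with rfl | rfl <;> simpa using this
    have h₂ : (b * b)⁻¹ * (b * x) * b = (b * b)⁻¹ * (x * b) * b := by
      calc _ = (b⁻¹ * b * b)⁻¹ * x * b := by group
        _ = _ := by rw [h₁]; group
    exact mul_left_cancel (mul_right_cancel h₂)
  exact eq_one_or_neg_one_of_commute (hcomm _) (hcomm _)

theorem mul_unitJ_of_complex {u : unitary ℍ} (hj : (u : ℍ).imJ = 0) (hk : (u : ℍ).imK = 0) :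
    u * unitJ = unitJ * u⁻¹ := by
  apply Subtype.ext
  rw [← Unitary.star_eq_inv, (unitary ℍ).coe_mul, (unitary ℍ).coe_mul, Unitary.coe_star, coe_unitJ]
  ext <;> simp [hj, hk]

theorem SquareAssociative.eq_of_inv_mul_of_complex (hj : (a : ℍ).imJ = 0) (hk : (a : ℍ).imK = 0)
    (h : SquareAssociative fun x y : unitary ℍ => x⁻¹ * a * y * b) :
    ((a = 1 ∨ a = -1) ∨ (a = unitI ∨ a = -unitI)) ∧ (b = 1 ∨ b = -1) := by
  have hn : (a : ℍ).re ^ 2 + (a : ℍ).imI ^ 2 = 1 := by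
    simpa [normSq_def', hj, hk] using mem_unitary_iff_normSq.1 a.2
  by_cases hi : (a : ℍ).imI = 0
  · have ha : a = 1 ∨ a = -1 := by
      rw [hi] at hn
      rcases sq_eq_one_iff.1 (by linarith : (a : ℍ).re ^ 2 = 1) with h | h
      · exact .inl (Subtype.ext (by ext <;> simp [*]))
      · exact .inr (Subtype.ext (by ext <;> simp [*, Unitary.coe_neg]))
    exact ⟨.inl ha, h.eq_of_inv_mul_of_central ha⟩
  have hab : Commute a b := h.commute_of_inv_mul
  have hab' := congrArg (fun z : unitary ℍ => (z : ℍ)) hab.eq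
  simp only [(unitary ℍ).coe_mul, Quaternion.ext_iff, re_mul, imI_mul, imJ_mul, imK_mul, hj,
    hk] at hab'
  have hbj : (b : ℍ).imJ = 0 := by
    refine (mul_eq_zero.1 ?_).resolve_left hi
    linarith [hab'.2.2.2]
  have hbk : (b : ℍ).imK = 0 := by
    refine (mul_eq_zero.1 ?_).resolve_left hi
    linarith [hab'.2.2.1]
  have haJ := mul_unitJ_of_complex hj hk
  have hb : b * (a * a)⁻¹ = 1 ∨ b * (a * a)⁻¹ = -1 := by
    have hs : unitJ⁻¹ * a * unitJ * b = a⁻¹ * b := by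
      rw [mul_assoc unitJ⁻¹, haJ, inv_mul_cancel_left]
    have hbJ : unitJ * b = b⁻¹ * unitJ := by
      rw [eq_inv_mul_iff_mul_eq, ← mul_assoc, mul_unitJ_of_complex hbj hbk, inv_mul_cancel_right]
    have h₁ := h unitJ
    simp only [hs] at h₁
    simp only [mul_inv_rev, inv_inv, mul_assoc, hbJ, inv_mul_cancel_left, mul_inv_cancel_left,
      hab.symm.inv_left.left_comm, hab.symm.inv_inv.left_comm] at h₁
    have h₂ : b * b = a * a * (a * a) := by
      have h₃ : b⁻¹ * b⁻¹ * unitJ = a * a * (a * a) * (b * b)⁻¹ * (b⁻¹ * b⁻¹ * unitJ) := by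
        simpa only [mul_inv_rev, mul_assoc] using h₁
      exact (mul_inv_eq_one.1 (right_eq_mul.1 h₃)).symm
    apply eq_one_or_neg_one_of_mul_self
    rw [(hab.mul_left hab).inv_left.mul_mul_mul_comm, h₂]
    group
  obtain ⟨t, htc, hax, htx⟩ : ∃ t : unitary ℍ, (t : ℍ) = mkQuat (a : ℍ).re 0 0 (a : ℍ).imI ∧
      a * sqrtJ = sqrtJ * t ∧ t * sqrtJ = sqrtJ * a⁻¹ := by
    refine ⟨⟨mkQuat (a : ℍ).re 0 0 (a : ℍ).imI, ?_⟩, rfl, ?_, ?_⟩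
    · simpa [mem_unitary_iff_normSq, normSq_def'] using hn
    · apply Subtype.ext
      rw [(unitary ℍ).coe_mul, (unitary ℍ).coe_mul, coe_sqrtJ]
      ext <;> simp [hj, hk, mul_comm]
    · apply Subtype.ext
      rw [← Unitary.star_eq_inv, (unitary ℍ).coe_mul, (unitary ℍ).coe_mul, Unitary.coe_star,
        coe_sqrtJ]
      ext <;> simp [hj, hk, mul_comm]
  have hkey : t⁻¹ * a⁻¹ * t * a = a * a * (t⁻¹ * a⁻¹ * t⁻¹ * a * t⁻¹ * t⁻¹) * (a * a)⁻¹ := by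
    have hs : sqrtJ⁻¹ * a * sqrtJ = t := by
      rw [mul_assoc, hax, inv_mul_cancel_left]
    have h₁ : ((t * (a * a))⁻¹ * a * (t * (a * a)) * (a * a))⁻¹ * a * sqrtJ * (a * a) =
        (t * (a * a))⁻¹ * a * ((t * (a * a))⁻¹ * a * sqrtJ * (a * a)) * (a * a) := by
      have h₂ := h sqrtJ
      simp only [hs] at h₂
      rcases hb with hb | hb
      · rw [mul_inv_eq_one] at hb
        rwa [hb] at h₂
      · rw [mul_inv_eq_iff_eq_mul, neg_mul, one_mul] at hb
        simpa only [hb, mul_neg, neg_mul, neg_neg, inv_neg] using h₂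
    have hxa : sqrtJ * (a * a) * sqrtJ⁻¹ = t⁻¹ * t⁻¹ := by
      have : sqrtJ * a * sqrtJ⁻¹ = t⁻¹ := by
        rw [mul_inv_eq_iff_eq_mul, eq_inv_mul_iff_mul_eq, ← mul_assoc, htx, inv_mul_cancel_right]
      rw [← this]
      group
    have h₂ : (a * a)⁻¹ * (a * a)⁻¹ * (t⁻¹ * a⁻¹ * t * a) * (a * a) * sqrtJ * (a * a) =
        (a * a)⁻¹ * (a * a)⁻¹ * (a * a * (t⁻¹ * a⁻¹ * t⁻¹ * a * t⁻¹ * t⁻¹) * (a * a)⁻¹) *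
          (a * a) * sqrtJ * (a * a) := by
      calc
        _ = ((t * (a * a))⁻¹ * a * (t * (a * a)) * (a * a))⁻¹ * a * sqrtJ * (a * a) := by
          simp [mul_assoc]
        _ = (a * a)⁻¹ * t⁻¹ * a⁻¹ * t⁻¹ * a * (sqrtJ * (a * a) * sqrtJ⁻¹) * sqrtJ * (a * a) := by
          rw [h₁]; group
        _ = _ := by rw [hxa]; group
    exact mul_left_cancel (mul_right_cancel (mul_right_cancel (mul_right_cancel h₂)))
  have hre : (a : ℍ).re = 0 := by
    have h₁ : (star (t : ℍ) * star (a : ℍ) * t * a).re =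
        (star (t : ℍ) * star (a : ℍ) * star (t : ℍ) * a * star (t : ℍ) * star (t : ℍ)).re := by
      have h₂ : ((t⁻¹ * a⁻¹ * t * a : unitary ℍ) : ℍ).re =
          ((t⁻¹ * a⁻¹ * t⁻¹ * a * t⁻¹ * t⁻¹ : unitary ℍ) : ℍ).re := by
        rw [hkey, (unitary ℍ).coe_mul, re_mul_comm, ← (unitary ℍ).coe_mul, inv_mul_cancel_left]
      simpa only [(unitary ℍ).coe_mul, ← Unitary.star_eq_inv, Unitary.coe_star] using h₂
    simp only [htc, re_mul, imI_mul, imJ_mul, imK_mul, re_star, imI_star, imJ_star, imK_star,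
      re_mkQuat, imI_mkQuat, imJ_mkQuat, imK_mkQuat, hj, hk] at h₁
    have h₂ : 8 * (a : ℍ).re ^ 4 * (a : ℍ).imI ^ 2 = 0 := by
      linear_combination h₁ +
        ((a : ℍ).re ^ 4 + 2 * (a : ℍ).re ^ 2 * (a : ℍ).imI ^ 2 - (a : ℍ).imI ^ 4) * hn
    simpa [hi] using h₂
  rw [hre] at hn
  have ha : a = unitI ∨ a = -unitI := by
    rcases sq_eq_one_iff.1 (by linarith : (a : ℍ).imI ^ 2 = 1) with h | h
    · exact .inl (Subtype.ext (by ext <;> simp [*, coe_unitI]))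
    · exact .inr (Subtype.ext (by ext <;> simp [*, coe_unitI, Unitary.coe_neg]))
  refine ⟨.inr ha, ?_⟩
  have haa : a * a = -1 := by
    rcases ha with rfl | rfl <;> simp [unitI_mul_self]
  rw [haa, mul_inv_eq_iff_eq_mul, mul_inv_eq_iff_eq_mul] at hb
  simpa using hb.symm

end GroupIdentities

section Classification

open Quaternion

theorem Quaternion.star_unitary_mul_cancel_left (u : unitary ℍ) (z : ℍ) :
    star (u : ℍ) * (u * z) = z := by
  rw [← mul_assoc, Unitary.star_mul_self_of_mem u.2, one_mul]

theorem Quaternion.unitary_mul_star_cancel_left (u : unitary ℍ) (z : ℍ) :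
    (u : ℍ) * (star (u : ℍ) * z) = z := by
  rw [← mul_assoc, Unitary.mul_star_self_of_mem u.2, one_mul]

/-- Every unit quaternion is conjugate to a complex number. -/
theorem exists_conj_complex (a : unitary ℍ) :
    ∃ p : unitary ℍ, ((p * a * p⁻¹ : unitary ℍ) : ℍ).imJ = 0 ∧
      ((p * a * p⁻¹ : unitary ℍ) : ℍ).imK = 0 := by
  obtain ⟨r, b, c, d, ha⟩ : ∃ r b c d : ℝ, (a : ℍ) = mkQuat r b c d := ⟨_, _, _, _, rfl⟩
  by_cases hcd : c ^ 2 + d ^ 2 = 0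
  · have hc : c = 0 := by nlinarith [sq_nonneg c, sq_nonneg d]
    have hd : d = 0 := by nlinarith [sq_nonneg c, sq_nonneg d]
    exact ⟨1, by simp [ha, hc], by simp [ha, hd]⟩
  obtain ⟨n, hn⟩ : ∃ n : ℝ, n ^ 2 = b ^ 2 + c ^ 2 + d ^ 2 := ⟨_, Real.sq_sqrt (by positivity)⟩
  obtain ⟨w, hw⟩ : ∃ w, w = mkQuat (n + b) 0 d (-c) := ⟨_, rfl⟩
  have hw0 : w ≠ 0 := by
    rintro rfl
    rw [Quaternion.ext_iff] at hw
    simp only [re_zero, imI_zero, imJ_zero, imK_zero, re_mkQuat, imI_mkQuat, imJ_mkQuat,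
      imK_mkQuat] at hw
    obtain ⟨-, -, hd, hc⟩ := hw
    exact hcd (by rw [← hd, neg_eq_zero.1 hc.symm]; ring)
  have hp : ‖w‖⁻¹ • w ∈ unitary ℍ := by
    rw [mem_unitary_iff_normSq, normSq_smul, normSq_eq_norm_mul_self]
    field_simp [norm_ne_zero_iff.2 hw0]
  have hcoe : (((⟨_, hp⟩ * a * ⟨_, hp⟩⁻¹ : unitary ℍ)) : ℍ) =
      (‖w‖⁻¹ * ‖w‖⁻¹) • (w * mkQuat r b c d * star w) := by
    rw [← Unitary.star_eq_inv, (unitary ℍ).coe_mul, (unitary ℍ).coe_mul, Unitary.coe_star, ha]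
    simp [smul_smul]
  refine ⟨⟨_, hp⟩, ?_, ?_⟩
  · rw [hcoe, imJ_smul, hw]
    refine smul_eq_zero_of_right _ ?_
    simp
    linear_combination c * hn
  · rw [hcoe, imK_smul, hw]
    refine smul_eq_zero_of_right _ ?_
    simp
    linear_combination d * hn

variable {A : Type*} [NormedAddCommGroup A] [NormedSpace ℝ A] {mul : A →ₗ[ℝ] A →ₗ[ℝ] A}

theorem squareAssociative_of_equiv {op : unitary ℍ → unitary ℍ → unitary ℍ} (e : A ≃ₗ[ℝ] ℍ)
    (h : ∀ x : A, mul (mul (mul x x) (mul x x)) x = mul (mul x x) (mul (mul x x) x))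
    (hop : ∀ x y u v, e x = (u : unitary ℍ) → e y = (v : unitary ℍ) → e (mul x y) = op u v) :
    SquareAssociative op := by
  intro u
  obtain ⟨x, hx⟩ := e.surjective u
  have hs := hop x x u u hx hx
  exact Subtype.ext ((hop _ _ _ _ (hop _ _ _ _ hs hs) hx).symm.trans
    ((congrArg e (h x)).trans (hop _ _ _ _ hs (hop _ _ _ _ hs hx))))

/-- An isomorphism onto a product on `ℍ` may be composed with `x ↦ u * x * v`. -/
theorem exists_equiv_unitary_mul (u v : unitary ℍ) {f g : ℍ → ℍ → ℍ}
    (he : ∃ e : A ≃ₗ[ℝ] ℍ, ∀ x y : A, e (mul x y) = f (e x) (e y))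
    (hfg : ∀ x y : ℍ, u * f x y * v = g (u * x * v) (u * y * v)) :
    ∃ e : A ≃ₗ[ℝ] ℍ, ∀ x y : A, e (mul x y) = g (e x) (e y) := by
  obtain ⟨e, he⟩ := he
  let m : ℍ ≃ₗ[ℝ] ℍ := LinearEquiv.ofLinearMap
    (LinearMap.mulLeft ℝ (u : ℍ) ∘ₗ LinearMap.mulRight ℝ (v : ℍ))
    (LinearMap.mulLeft ℝ (star (u : ℍ)) ∘ₗ LinearMap.mulRight ℝ (star (v : ℍ)))
    (LinearMap.ext fun x => by simp [mul_assoc, unitary_mul_star_cancel_left])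
    (LinearMap.ext fun x => by simp [mul_assoc, star_unitary_mul_cancel_left])
  refine ⟨e.trans m, fun x y => ?_⟩
  simpa [m, he, mul_assoc] using hfg (e x) (e y)

theorem exists_equiv_of_neg {f : ℍ → ℍ → ℍ} (e : A ≃ₗ[ℝ] ℍ)
    (he : ∀ x y : A, e (mul x y) = -f (e x) (e y)) (hf : ∀ x y : ℍ, f (-x) (-y) = f x y) :
    ∃ e : A ≃ₗ[ℝ] ℍ, ∀ x y : A, e (mul x y) = f (e x) (e y) :=
  exists_equiv_unitary_mul (-1) 1 (f := fun x y => -f x y) ⟨e, he⟩ fun x y => by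
    simp [hf, Unitary.coe_neg]

theorem exists_equiv_of_mul_mul {a b c : unitary ℍ}
    (h : ∀ x : A, mul (mul (mul x x) (mul x x)) x = mul (mul x x) (mul (mul x x) x))
    (he : ∃ e : A ≃ₗ[ℝ] ℍ, ∀ x y : A, e (mul x y) = a * e x * b * e y * c) :
    ∃ e : A ≃ₗ[ℝ] ℍ, ∀ x y : A, e (mul x y) = e x * e y := by
  obtain ⟨e, he'⟩ := exists_equiv_unitary_mul 1 b (f := fun x y => a * x * b * y * c)
    (g := fun x y => a * x * y * (b⁻¹ * c * b : unitary ℍ)) he fun x y => by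
      simp [← Unitary.star_eq_inv, mul_assoc, unitary_mul_star_cancel_left]
  have hsq : SquareAssociative fun x y => a * x * y * (b⁻¹ * c * b) :=
    squareAssociative_of_equiv e h fun x y u v hx hy => by
      simp only [he', hx, hy, (unitary ℍ).coe_mul]
  obtain ⟨ha, hc⟩ := hsq.eq_of_mul_mul
  rcases ha with rfl | rfl <;> rcases hc with hc | hc <;> simp only [hc] at he'
  · exact ⟨e, by simpa using he'⟩
  · exact exists_equiv_of_neg (f := (· * ·)) e (by simpa [Unitary.coe_neg] using he') (by simp)
  · exact exists_equiv_of_neg (f := (· * ·)) e (by simpa [Unitary.coe_neg] using he') (by simp)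
  · exact ⟨e, by simpa [Unitary.coe_neg] using he'⟩

theorem exists_equiv_of_star_mul {a b c : unitary ℍ}
    (h : ∀ x : A, mul (mul (mul x x) (mul x x)) x = mul (mul x x) (mul (mul x x) x))
    (he : ∃ e : A ≃ₗ[ℝ] ℍ, ∀ x y : A, e (mul x y) = a * star (e x) * b * e y * c) :
    (∃ e : A ≃ₗ[ℝ] ℍ, ∀ x y : A, e (mul x y) = star (e x) * e y) ∨
      ∃ e : A ≃ₗ[ℝ] ℍ, ∀ x y : A, e (mul x y) = star (e x) * quatI * e y := by
  obtain ⟨p, hj, hk⟩ := exists_conj_complex b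
  obtain ⟨e, he'⟩ := exists_equiv_unitary_mul p (a⁻¹ * p⁻¹) (f := fun x y => a * star x * b * y * c)
    (g := fun x y => star x * (p * b * p⁻¹ : unitary ℍ) * y * (p * (a * c * a⁻¹) * p⁻¹ : unitary ℍ))
    he fun x y => by
      simp [← Unitary.star_eq_inv, mul_assoc, star_unitary_mul_cancel_left]
  have hsq : SquareAssociative fun x y => x⁻¹ * (p * b * p⁻¹) * y * (p * (a * c * a⁻¹) * p⁻¹) :=
    squareAssociative_of_equiv e h fun x y u v hx hy => by
      simp only [he', hx, hy, (unitary ℍ).coe_mul, ← Unitary.star_eq_inv, Unitary.coe_star]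
  obtain ⟨hb, hc⟩ := hsq.eq_of_inv_mul_of_complex hj hk
  have hI : (unitI : ℍ) = quatI := rfl
  rcases hb with (hb | hb) | (hb | hb) <;> rcases hc with hc | hc <;> simp only [hb, hc] at he'
  · exact .inl ⟨e, by simpa using he'⟩
  · exact .inl (exists_equiv_of_neg (f := (star · * ·)) e
      (by simpa [Unitary.coe_neg] using he') (by simp))
  · exact .inl (exists_equiv_of_neg (f := (star · * ·)) e
      (by simpa [Unitary.coe_neg] using he') (by simp))
  · exact .inl ⟨e, by simpa [Unitary.coe_neg] using he'⟩
  · exact .inr ⟨e, by simpa [hI] using he'⟩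
  · exact .inr (exists_equiv_of_neg (f := (star · * quatI * ·)) e
      (by simpa [Unitary.coe_neg, hI] using he') (by simp))
  · exact .inr (exists_equiv_of_neg (f := (star · * quatI * ·)) e
      (by simpa [Unitary.coe_neg, hI] using he') (by simp))
  · exact .inr ⟨e, by simpa [Unitary.coe_neg, hI] using he'⟩

theorem not_exists_equiv_mul_star {a b c : unitary ℍ}
    (h : ∀ x : A, mul (mul (mul x x) (mul x x)) x = mul (mul x x) (mul (mul x x) x)) :
    ¬∃ e : A ≃ₗ[ℝ] ℍ, ∀ x y : A, e (mul x y) = a * e x * b * star (e y) * c := by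
  intro he
  obtain ⟨e, he'⟩ := exists_equiv_unitary_mul c⁻¹ 1 (f := fun x y => a * x * b * star y * c)
    (g := fun x y => (c⁻¹ * a * c : unitary ℍ) * x * b * star y) he fun x y => by
      simp [← Unitary.star_eq_inv, mul_assoc, unitary_mul_star_cancel_left]
  have hsq : SquareAssociative fun x y => (c⁻¹ * a * c) * x * b * y⁻¹ :=
    squareAssociative_of_equiv e h fun x y u v hx hy => by
      simp only [he', hx, hy, (unitary ℍ).coe_mul, ← Unitary.star_eq_inv, Unitary.coe_star]
  exact not_squareAssociative_mul_inv hsq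

theorem not_exists_equiv_star_star {a b c : unitary ℍ}
    (h : ∀ x : A, mul (mul (mul x x) (mul x x)) x = mul (mul x x) (mul (mul x x) x)) :
    ¬∃ e : A ≃ₗ[ℝ] ℍ, ∀ x y : A, e (mul x y) = a * star (e x) * b * star (e y) * c := by
  intro he
  obtain ⟨e, he'⟩ := exists_equiv_unitary_mul b⁻¹ 1 (f := fun x y => a * star x * b * star y * c)
    (g := fun x y => (b⁻¹ * a : unitary ℍ) * star x * star y * (b⁻¹ * c : unitary ℍ)) he
    fun x y => by
      simp [← Unitary.star_eq_inv, mul_assoc, unitary_mul_star_cancel_left]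
  have hsq : SquareAssociative fun x y => (b⁻¹ * a) * x⁻¹ * y⁻¹ * (b⁻¹ * c) :=
    squareAssociative_of_equiv e h fun x y u v hx hy => by
      simp only [he', hx, hy, (unitary ℍ).coe_mul, ← Unitary.star_eq_inv, Unitary.coe_star]
  exact not_squareAssociative_inv_inv hsq

end Classification

/-- A 4-dimensional absolute-valued real algebra satisfies the identity `(x², x², x) = 0`
if and only if it is isomorphic to `ℍ`, to `*ℍ` (product `x ⊙ y = x̄ * y`), or to
`*ℍ(i,1)` (product `x ⊙ y = x̄ * i * y`). -/
theorem stmt_12 {A : Type*} [NormedAddCommGroup A] [NormedSpace ℝ A]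
    (mul : A →ₗ[ℝ] A →ₗ[ℝ] A)
    (habs : ∀ x y : A, ‖mul x y‖ = ‖x‖ * ‖y‖)
    (hdim : Module.finrank ℝ A = 4) :
    (∀ x : A, mul (mul (mul x x) (mul x x)) x = mul (mul x x) (mul (mul x x) x))
      ↔ ((∃ e : A ≃ₗ[ℝ] Quaternion ℝ, ∀ x y : A, e (mul x y) = e x * e y) ∨
          (∃ e : A ≃ₗ[ℝ] Quaternion ℝ, ∀ x y : A, e (mul x y) = star (e x) * e y) ∨
          (∃ e : A ≃ₗ[ℝ] Quaternion ℝ,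
            ∀ x y : A, e (mul x y) = star (e x) * quatI * e y)) := by
  constructor
  · intro h
    obtain ⟨e, F, G, he⟩ := exists_isotopy_quaternion hdim mul habs
    obtain ⟨a, b, hF⟩ := exists_unitary_of_linearIsometryEquiv F
    obtain ⟨c, d, hG⟩ := exists_unitary_of_linearIsometryEquiv G
    have hcoe : ((b * c : unitary (Quaternion ℝ)) : Quaternion ℝ) = b * c := rfl
    rcases hF with hF | hF <;> rcases hG with hG | hG
    · exact .inl (exists_equiv_of_mul_mul (a := a) (b := b * c) (c := d) h
        ⟨e, fun x y => by rw [he, hF, hG, hcoe]; simp only [mul_assoc]⟩)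
    · exact (not_exists_equiv_mul_star (a := a) (b := b * c) (c := d) h
        ⟨e, fun x y => by rw [he, hF, hG, hcoe]; simp only [mul_assoc]⟩).elim
    · exact .inr (exists_equiv_of_star_mul (a := a) (b := b * c) (c := d) h
        ⟨e, fun x y => by rw [he, hF, hG, hcoe]; simp only [mul_assoc]⟩)
    · exact (not_exists_equiv_star_star (a := a) (b := b * c) (c := d) h
        ⟨e, fun x y => by rw [he, hF, hG, hcoe]; simp only [mul_assoc]⟩).elim
  · rintro (⟨e, he⟩ | ⟨e, he⟩ | ⟨e, he⟩) x <;> apply e.injective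
    · simp only [he, mul_assoc]
    · simp only [he, Quaternion.star_mul_self, Quaternion.star_coe]
      rw [← Quaternion.coe_mul, Quaternion.star_coe, Quaternion.coe_mul, mul_assoc]
    · have hI : star quatI = -quatI := by
        rw [show quatI = mkQuat 0 1 0 0 from rfl]
        ext <;> simp
      simp only [he, star_mul, star_star, star_neg, hI, mul_neg, neg_mul, neg_neg, mul_assoc]
end

section
/- Let A be a 4-dimensional absolute-valued real algebra. Then A satisfies the identity (x², x, x²) = 0 (i.e. (x² x) x² = x² (x x²) for all x ∈ A, where x² = xx) if and only if A is isomorphic to ℍ, to ⁎ℍ, or there exists α ∈ [0,π) such that A is isomorphic to *ℍ(1, e^{iα}) or to ℍ*(e^{iα}, 1). -/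
/-- The quaternion `e^{iα} = cos α + (sin α) i`. -/
noncomputable def quatExpI (α : ℝ) : Quaternion ℝ := ⟨Real.cos α, Real.sin α, 0, 0⟩

section InvariantForm

open MeasureTheory

/-- A finite-dimensional real normed space carries an inner product that is invariant under all
its linear isometries. -/
theorem exists_isometry_invariant_form {A : Type*} [NormedAddCommGroup A] [NormedSpace ℝ A]
    [FiniteDimensional ℝ A] :
    ∃ b : A →ₗ[ℝ] A →ₗ[ℝ] ℝ, (∀ x y, b x y = b y x) ∧ (∀ x, x ≠ 0 → 0 < b x x) ∧
      ∀ (g : A ≃ₗᵢ[ℝ] A) (x y : A), b (g x) (g y) = b x y := by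
  let : MeasurableSpace A := borel A
  have : BorelSpace A := ⟨rfl⟩
  set μ : Measure A := Measure.hausdorffMeasure (Module.finrank ℝ A) with hμ
  have : μ.IsAddHaarMeasure := isAddHaarMeasure_hausdorffMeasure
  let w : A → ℝ := fun x => max 0 (1 - ‖x‖)
  have hw : Continuous w := by fun_prop
  have hws : HasCompactSupport w := by
    refine HasCompactSupport.of_support_subset_isCompact (isCompact_closedBall (0 : A) 1) ?_
    intro x hx
    by_contra h
    rw [mem_closedBall_zero_iff, not_le] at h
    exact hx (max_eq_left (by linarith))
  have hint (f : A →L[ℝ] ℝ) : Integrable (fun x => (w x * f x) • x) μ := by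
    refine Continuous.integrable_of_hasCompactSupport (by fun_prop) ?_
    exact (hws.mul_right (f' := f)).smul_right
  let T : (A →L[ℝ] ℝ) →ₗ[ℝ] A :=
    { toFun := fun f => ∫ x, (w x * f x) • x ∂μ
      map_add' := fun f h => by
        rw [← integral_add (hint f) (hint h)]
        congr 1; ext x; simp [mul_add, add_smul]
      map_smul' := fun c f => by
        rw [RingHom.id_apply, ← integral_smul]
        congr 1; ext x; simp only [smul_apply, smul_eq_mul, smul_smul]
        congr 1; ring }
  have hT (f : A →L[ℝ] ℝ) : T f = ∫ x, (w x * f x) • x ∂μ := rfl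
  have happ (f h : A →L[ℝ] ℝ) : h (T f) = ∫ x, w x * f x * h x ∂μ := by
    rw [hT, ← h.integral_comp_comm (hint f)]
    simp
  have hpos (f : A →L[ℝ] ℝ) (hf : f ≠ 0) : 0 < f (T f) := by
    rw [happ]
    obtain ⟨x, hx⟩ : ∃ x, f x ≠ 0 := by
      by_contra! h
      exact hf (ContinuousLinearMap.ext h)
    have hx0 : 0 < ‖x‖ := norm_pos_iff.2 (by rintro rfl; simp at hx)
    refine Continuous.integral_pos_of_hasCompactSupport_nonneg_nonzero
      (x := (2 * ‖x‖)⁻¹ • x) (by fun_prop) ((hws.mul_right (f' := f)).mul_right (f' := f)) ?_ ?_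
    · intro y
      simp only [Pi.zero_apply, mul_assoc]
      exact mul_nonneg (le_max_left _ _) (mul_self_nonneg _)
    · have : w ((2 * ‖x‖)⁻¹ • x) = 1 / 2 := by
        simp only [w, norm_smul, norm_inv, norm_mul, norm_norm, Real.norm_ofNat]
        have : (2 * ‖x‖)⁻¹ * ‖x‖ = 1 / 2 := by field_simp
        rw [this]; norm_num
      rw [this, map_smul]
      simp [hx, hx0.ne']
  have hinj : Function.Injective T := by
    rw [← LinearMap.ker_eq_bot, LinearMap.ker_eq_bot']
    intro f hf
    by_contra h
    have := hpos f h
    simp [hf] at this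
  have hfin : Module.finrank ℝ (A →L[ℝ] ℝ) = Module.finrank ℝ A := by
    rw [← (LinearMap.toContinuousLinearMap (𝕜 := ℝ) (E := A) (F' := ℝ)).finrank_eq]
    exact Subspace.dual_finrank_eq
  let E : (A →L[ℝ] ℝ) ≃ₗ[ℝ] A := LinearEquiv.ofInjectiveOfFinrankEq T hinj hfin
  have hE (f : A →L[ℝ] ℝ) : E f = T f := rfl
  have hET (x : A) : T (E.symm x) = x := E.apply_symm_apply x
  refine ⟨(ContinuousLinearMap.coeLM ℝ).comp E.symm.toLinearMap, fun x y => ?_, fun x hx => ?_,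
    fun g x y => ?_⟩
  · change E.symm x y = E.symm y x
    conv_lhs => rw [← hET y]
    conv_rhs => rw [← hET x]
    rw [happ, happ]
    congr 1; ext z; ring
  · change 0 < E.symm x x
    conv_rhs => rw [← hET x]
    rw [hET]
    have := hpos (E.symm x) (by simpa using hx)
    rwa [hET] at this
  · change E.symm (g x) (g y) = E.symm x y
    have : E.symm (g x) = (E.symm x).comp (g.symm : A →L[ℝ] A) := by
      rw [LinearEquiv.symm_apply_eq, hE]
      conv_lhs => rw [← hET x, hT]
      have hmp : MeasurePreserving g μ μ := g.toIsometryEquiv.measurePreserving_hausdorffMeasure _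
      rw [hT, ← hmp.integral_comp g.toHomeomorph.measurableEmbedding
        (fun z => (w z * ((E.symm x).comp (g.symm : A →L[ℝ] A)) z) • z)]
      have := (g : A →L[ℝ] A).integral_comp_comm (hint (E.symm x))
      refine this.symm.trans ?_
      congr 1; ext z
      simp [w]
    rw [this]
    simp

theorem parallelogram_of_absolute_value {A : Type*} [NormedAddCommGroup A] [NormedSpace ℝ A]
    [FiniteDimensional ℝ A] (mul : A →ₗ[ℝ] A →ₗ[ℝ] A)
    (habs : ∀ x y : A, ‖mul x y‖ = ‖x‖ * ‖y‖) (x y : A) :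
    ‖x + y‖ * ‖x + y‖ + ‖x - y‖ * ‖x - y‖ = 2 * (‖x‖ * ‖x‖ + ‖y‖ * ‖y‖) := by
  obtain ⟨b, hsymm, hpos, hinv⟩ := exists_isometry_invariant_form (A := A)
  rcases subsingleton_or_nontrivial A with hA | hA
  · simp [Subsingleton.elim x 0, Subsingleton.elim y 0]
  obtain ⟨u, hu⟩ := exists_norm_eq A zero_le_one
  have hu0 : u ≠ 0 := by rintro rfl; simp at hu
  have hunit (z : A) (hz : ‖z‖ = 1) : b z z = b u u := by
    have hinj : Function.Injective (mul.flip u) := by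
      rw [← LinearMap.ker_eq_bot, LinearMap.ker_eq_bot']
      intro v hv
      have := habs v u
      rw [LinearMap.flip_apply] at hv
      rw [hv, hu] at this
      simpa using this.symm
    obtain ⟨v, hv⟩ := LinearMap.injective_iff_surjective.1 hinj z
    rw [LinearMap.flip_apply] at hv
    have hv1 : ‖v‖ = 1 := by
      have := habs v u
      rw [hv, hu, hz] at this
      simpa using this.symm
    let g : A →ₗᵢ[ℝ] A := ⟨mul v, fun a => by rw [habs, hv1, one_mul]⟩
    have := hinv (g.toLinearIsometryEquiv rfl) u u
    simpa [g, hv] using this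
  have hform (z : A) : b z z = b u u * (‖z‖ * ‖z‖) := by
    rcases eq_or_ne z 0 with rfl | hz
    · simp
    have hz' : ‖z‖ ≠ 0 := norm_ne_zero_iff.2 hz
    have := hunit (‖z‖⁻¹ • z) (by rw [norm_smul, norm_inv, norm_norm, inv_mul_cancel₀ hz'])
    simp only [map_smul, LinearMap.smul_apply, smul_eq_mul] at this
    rw [← this]
    field_simp
  have h : b (x + y) (x + y) + b (x - y) (x - y) = 2 * (b x x + b y y) := by
    simp only [map_add, map_sub, LinearMap.add_apply, LinearMap.sub_apply]
    ring
  rw [hform (x + y), hform (x - y), hform x, hform y] at h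
  have := hpos u hu0
  apply mul_left_cancel₀ this.ne'
  linarith

end InvariantForm

section QuaternionIsotopes

open Quaternion

theorem Quaternion.mul_star_of_norm_eq_one {a : ℍ[ℝ]} (ha : ‖a‖ = 1) : a * star a = 1 := by
  rw [Quaternion.self_mul_star, Quaternion.normSq_eq_norm_mul_self, ha]; simp

theorem Quaternion.star_mul_of_norm_eq_one {a : ℍ[ℝ]} (ha : ‖a‖ = 1) : star a * a = 1 := by
  rw [Quaternion.star_mul_self, Quaternion.normSq_eq_norm_mul_self, ha]; simp

theorem Quaternion.reflection_unit {u : ℍ[ℝ]} (hu : ‖u‖ = 1) (x : ℍ[ℝ]) :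
    (ℝ ∙ u)ᗮ.reflection x = -u * star x * u := by
  rw [Submodule.reflection_orthogonal_apply, Submodule.reflection_singleton_apply, hu,
    Quaternion.inner_def, two_smul]
  have h1 : normSq u = 1 := by rw [Quaternion.normSq_eq_norm_mul_self, hu, one_mul]
  rw [Quaternion.normSq_def'] at h1
  ext <;> simp <;> grind

theorem Quaternion.linearIsometryEquiv_eq (f : ℍ[ℝ] ≃ₗᵢ[ℝ] ℍ[ℝ]) :
    ∃ p q : ℍ[ℝ], ‖p‖ = 1 ∧ ‖q‖ = 1 ∧
      ((∀ x, f x = p * x * q) ∨ (∀ x, f x = p * star x * q)) := by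
  obtain ⟨l, -, rfl⟩ := f.reflections_generate_dim
  induction l with
  | nil => exact ⟨1, 1, by simp, by simp, Or.inl fun x => by simp⟩
  | cons v l ih =>
    obtain ⟨p, q, hp, hq, h⟩ := ih
    rcases eq_or_ne v 0 with rfl | hv
    · refine ⟨p, q, hp, hq, ?_⟩
      have h0 (y : ℍ[ℝ]) : (ℝ ∙ (0 : ℍ[ℝ]))ᗮ.reflection y = y :=
        Submodule.reflection_mem_subspace_eq_self (by simp)
      simpa only [List.map_cons, List.prod_cons, LinearIsometryEquiv.coe_mul,
        Function.comp_apply, h0] using h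
    have hv' : ‖v‖ ≠ 0 := norm_ne_zero_iff.2 hv
    set u := ‖v‖⁻¹ • v with hu_def
    have hu : ‖u‖ = 1 := by rw [hu_def, norm_smul, norm_inv, norm_norm, inv_mul_cancel₀ hv']
    have hspan : (ℝ ∙ v) = (ℝ ∙ u) :=
      (Submodule.span_singleton_smul_eq (IsUnit.mk0 _ (inv_ne_zero hv')) v).symm
    refine ⟨-u * star q, star p * u, by simp [hu, hq], by simp [hu, hp], ?_⟩
    simp only [List.map_cons, List.prod_cons, LinearIsometryEquiv.coe_mul, Function.comp_apply,
      hspan, Quaternion.reflection_unit hu]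
    rcases h with h | h
    · right
      intro x
      rw [h]
      simp [mul_assoc]
    · left
      intro x
      rw [h]
      simp [mul_assoc]

section Composition

variable {V : Type*} [NormedAddCommGroup V] [InnerProductSpace ℝ V] {m : V →ₗ[ℝ] V →ₗ[ℝ] V}

open scoped InnerProductSpace

theorem inner_mul_left_of_norm_mul (hm : ∀ x y, ‖m x y‖ = ‖x‖ * ‖y‖) (x y z : V) :
    ⟪m x y, m x z⟫_ℝ = ‖x‖ ^ 2 * ⟪y, z⟫_ℝ := by
  have h := hm x (y + z)
  rw [map_add] at h
  have h1 := norm_add_sq_real (m x y) (m x z)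
  have h2 := norm_add_sq_real y z
  rw [h, hm, hm] at h1
  linear_combination (-1 / 2) * h1 + (1 / 2) * ‖x‖ ^ 2 * h2

theorem inner_mul_right_of_norm_mul (hm : ∀ x y, ‖m x y‖ = ‖x‖ * ‖y‖) (x y z : V) :
    ⟪m y x, m z x⟫_ℝ = ‖x‖ ^ 2 * ⟪y, z⟫_ℝ :=
  inner_mul_left_of_norm_mul (m := m.flip) (fun a b => by simp [hm, mul_comm]) x y z

theorem inner_mul_exchange_of_norm_mul (hm : ∀ x y, ‖m x y‖ = ‖x‖ * ‖y‖) (x y z w : V) :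
    ⟪m x y, m z w⟫_ℝ + ⟪m z y, m x w⟫_ℝ = 2 * ⟪x, z⟫_ℝ * ⟪y, w⟫_ℝ := by
  have h := inner_mul_left_of_norm_mul hm (x + z) y w
  simp only [map_add, LinearMap.add_apply, inner_add_left, inner_add_right,
    inner_mul_left_of_norm_mul hm x, inner_mul_left_of_norm_mul hm z, norm_add_sq_real] at h
  linarith

/-- For `x, z` orthogonal to the unit `e`, `x (z y) + z (x y) = -2 ⟪x, z⟫ y`. -/
theorem mul_mul_add_mul_mul_of_norm_mul (hm : ∀ x y, ‖m x y‖ = ‖x‖ * ‖y‖) {e : V}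
    (he : ∀ x, m e x = x) {x z : V} (hx : ⟪x, e⟫_ℝ = 0) (hz : ⟪z, e⟫_ℝ = 0)
    (y : V) : m x (m z y) + m z (m x y) = -(2 * ⟪x, z⟫_ℝ) • y := by
  have skew (x y w : V) (hx : ⟪x, e⟫_ℝ = 0) : ⟪m x y, w⟫_ℝ = -⟪y, m x w⟫_ℝ := by
    have h := inner_mul_exchange_of_norm_mul hm x y e w
    rw [he, he, hx] at h
    linarith
  refine ext_inner_right ℝ fun w => ?_
  rw [inner_add_left, skew x _ _ hx, skew z (m x y) _ hz, real_inner_smul_left]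
  have h := inner_mul_exchange_of_norm_mul hm x y z w
  linarith

theorem exists_isometry_quaternion_of_norm_mul (hm : ∀ x y, ‖m x y‖ = ‖x‖ * ‖y‖) {e : V}
    (hel : ∀ x, m e x = x) (her : ∀ x, m x e = x) (hdim : Module.finrank ℝ V = 4) :
    ∃ φ : V ≃ₗᵢ[ℝ] ℍ[ℝ], ∀ x y, φ (m x y) = φ x * φ y := by
  have : FiniteDimensional ℝ V := Module.finite_of_finrank_pos (by omega)
  have : Nontrivial V := Module.nontrivial_of_finrank_pos (R := ℝ) (by omega)
  have he : ‖e‖ = 1 := by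
    obtain ⟨v, hv⟩ := exists_ne (0 : V)
    have := hm e v
    rw [hel] at this
    exact mul_right_cancel₀ (norm_ne_zero_iff.2 hv) (by rw [← this, one_mul])
  obtain ⟨c, hc⟩ := Orthonormal.exists_orthonormalBasis_extension_of_card_eq (𝕜 := ℝ)
    (ι := Fin 4) (by simpa using hdim) (v := fun _ => e) (s := {0})
    ⟨by simp [he], fun a b hab => (hab (Subsingleton.elim a b)).elim⟩
  have hc0 : c 0 = e := hc 0 rfl
  have hcn := c.orthonormal
  set i := c 1 with hi_def
  set j := c 2 with hj_def
  have hi : ‖i‖ = 1 := hcn.1 1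
  have hj : ‖j‖ = 1 := hcn.1 2
  have hie : ⟪i, e⟫_ℝ = 0 := by rw [← hc0]; exact hcn.2 (by decide)
  have hje : ⟪j, e⟫_ℝ = 0 := by rw [← hc0]; exact hcn.2 (by decide)
  have hij : ⟪i, j⟫_ℝ = 0 := hcn.2 (by decide)
  set k := m i j with hk_def
  have hk : ‖k‖ = 1 := by rw [hk_def, hm, hi, hj, one_mul]
  have hki : ⟪k, i⟫_ℝ = 0 := by
    have := inner_mul_left_of_norm_mul hm i j e
    rwa [her, hje, mul_zero] at this
  have hkj : ⟪k, j⟫_ℝ = 0 := by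
    have := inner_mul_right_of_norm_mul hm j i e
    rwa [hel, hie, mul_zero] at this
  have sq {x : V} (hx : ‖x‖ = 1) (hxe : ⟪x, e⟫_ℝ = 0) (y : V) : m x (m x y) = -y := by
    have := mul_mul_add_mul_mul_of_norm_mul hm hel hxe hxe y
    rw [real_inner_self_eq_norm_sq, hx, ← two_smul ℝ, neg_smul, ← smul_neg] at this
    refine smul_right_injective V (two_ne_zero (α := ℝ)) ?_
    simpa using this
  have anti {x z : V} (hx : ⟪x, e⟫_ℝ = 0) (hz : ⟪z, e⟫_ℝ = 0) (hxz : ⟪x, z⟫_ℝ = 0) (y : V) :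
      m x (m z y) = -m z (m x y) := by
    have := mul_mul_add_mul_mul_of_norm_mul hm hel hx hz y
    rw [hxz] at this
    rw [eq_neg_iff_add_eq_zero, this]; simp
  have hii : m i i = -e := by simpa [her] using sq hi hie e
  have hjj : m j j = -e := by simpa [her] using sq hj hje e
  have hke : ⟪k, e⟫_ℝ = 0 := by
    have := inner_mul_left_of_norm_mul hm i j i
    rw [hii, real_inner_comm i j, hij, inner_neg_right] at this
    simpa using this
  have hkk : m k k = -e := by simpa [her] using sq hk hke e
  have hik : m i k = -j := sq hi hie j
  have hji : m j i = -k := by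
    have := anti hje hie (by rw [real_inner_comm, hij]) e
    rwa [her, her] at this
  have hki' : m k i = j := by
    have := anti hke hie hki e
    rwa [her, her, hik, neg_neg] at this
  have hjk : m j k = i := by
    have := sq hj hje i
    rwa [hji, map_neg, neg_inj] at this
  have hkj' : m k j = -i := by
    have := anti hke hje hkj e
    rwa [her, her, hjk] at this
  have hon : Orthonormal ℝ ![e, i, j, k] := by
    have hei := (real_inner_comm i e).trans hie
    have hej := (real_inner_comm j e).trans hje
    have hek := (real_inner_comm k e).trans hke
    have hji' := (real_inner_comm i j).trans hij
    have hik' := (real_inner_comm k i).trans hki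
    have hjk' := (real_inner_comm k j).trans hkj
    constructor
    · intro a
      fin_cases a <;> simp [he, hi, hj, hk]
    · intro a b hab
      fin_cases a <;> fin_cases b <;> simp_all
  let B := basisOfOrthonormalOfCardEqFinrank hon (by simp [hdim])
  have hB : ⇑B = ![e, i, j, k] := coe_basisOfOrthonormalOfCardEqFinrank hon _
  let O : OrthonormalBasis (Fin 4) ℝ V := B.toOrthonormalBasis (by rw [hB]; exact hon)
  have hO : ⇑O = ![e, i, j, k] := by simp [O, hB]
  let φ : V ≃ₗᵢ[ℝ] ℍ[ℝ] := O.repr.trans Quaternion.linearIsometryEquivTuple.symm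
  have hφ (x : V) : φ x = ⟨O.repr x 0, O.repr x 1, O.repr x 2, O.repr x 3⟩ := rfl
  have hφb (a : Fin 4) : φ (![e, i, j, k] a) = ⟨(EuclideanSpace.single a (1 : ℝ)) 0,
      (EuclideanSpace.single a (1 : ℝ)) 1, (EuclideanSpace.single a (1 : ℝ)) 2,
      (EuclideanSpace.single a (1 : ℝ)) 3⟩ := by
    rw [hφ, ← hO, O.repr_self]
  have hφe : (φ e).re = 1 ∧ (φ e).imI = 0 ∧ (φ e).imJ = 0 ∧ (φ e).imK = 0 := by
    rw [show φ e = _ from hφb 0]; simp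
  have hφi : (φ i).re = 0 ∧ (φ i).imI = 1 ∧ (φ i).imJ = 0 ∧ (φ i).imK = 0 := by
    rw [show φ i = _ from hφb 1]; simp
  have hφj : (φ j).re = 0 ∧ (φ j).imI = 0 ∧ (φ j).imJ = 1 ∧ (φ j).imK = 0 := by
    rw [show φ j = _ from hφb 2]; simp
  have hφk : (φ k).re = 0 ∧ (φ k).imI = 0 ∧ (φ k).imJ = 0 ∧ (φ k).imK = 1 := by
    rw [show φ k = _ from hφb 3]; simp
  refine ⟨φ, fun x y => ?_⟩
  suffices h : m.compr₂ φ.toLinearEquiv.toLinearMap =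
      (LinearMap.mul ℝ ℍ[ℝ]).compl₁₂ φ.toLinearEquiv.toLinearMap φ.toLinearEquiv.toLinearMap from
    LinearMap.congr_fun₂ h x y
  refine B.ext fun a => B.ext fun b => ?_
  rw [hB]
  change φ (m _ _) = φ _ * φ _
  ext <;> fin_cases a <;> fin_cases b <;>
    simp [hel, her, hii, hjj, hkk, hik, hji, hki', hjk, hkj', ← hk_def, hφe, hφi, hφj, hφk]

/-- A four-dimensional absolute-valued algebra is an isotope of the quaternions. -/
theorem exists_isotopy_quaternion_of_norm_mul (hm : ∀ x y, ‖m x y‖ = ‖x‖ * ‖y‖)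
    (hdim : Module.finrank ℝ V = 4) :
    ∃ (φ : V ≃ₗᵢ[ℝ] ℍ[ℝ]) (f g : ℍ[ℝ] ≃ₗᵢ[ℝ] ℍ[ℝ]), ∀ x y, φ (m x y) = f (φ x) * g (φ y) := by
  have : FiniteDimensional ℝ V := Module.finite_of_finrank_pos (by omega)
  have : Nontrivial V := Module.nontrivial_of_finrank_pos (R := ℝ) (by omega)
  obtain ⟨u, hu⟩ := exists_norm_eq V zero_le_one
  let L : V ≃ₗᵢ[ℝ] V :=
    LinearIsometry.toLinearIsometryEquiv ⟨m u, fun a => by rw [hm, hu, one_mul]⟩ rfl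
  let R : V ≃ₗᵢ[ℝ] V := LinearIsometry.toLinearIsometryEquiv
    ⟨m.flip u, fun a => by rw [LinearMap.flip_apply, hm, hu, mul_one]⟩ rfl
  have hL (x : V) : L x = m u x := rfl
  have hR (x : V) : R x = m x u := rfl
  obtain ⟨φ, hφ⟩ := exists_isometry_quaternion_of_norm_mul
    (m := m.compl₁₂ R.symm.toLinearEquiv.toLinearMap L.symm.toLinearEquiv.toLinearMap) (e := m u u)
    (fun x y => by
      change ‖m (R.symm x) (L.symm y)‖ = _
      rw [hm, LinearIsometryEquiv.norm_map, LinearIsometryEquiv.norm_map])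
    (fun x => by
      change m (R.symm (R u)) (L.symm x) = x
      rw [R.symm_apply_apply, ← hL, L.apply_symm_apply])
    (fun x => by
      change m (R.symm x) (L.symm (L u)) = x
      rw [L.symm_apply_apply, ← hR, R.apply_symm_apply]) hdim
  refine ⟨φ, (φ.symm.trans R).trans φ, (φ.symm.trans L).trans φ, fun x y => ?_⟩
  have h := hφ (R x) (L y)
  change φ (m (R.symm (R x)) (L.symm (L y))) = _ at h
  rw [R.symm_apply_apply, L.symm_apply_apply] at h
  simpa using h

end Composition

theorem Quaternion.sum_sq_of_norm_eq_one {a : ℍ[ℝ]} (ha : ‖a‖ = 1) :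
    a.re ^ 2 + a.imI ^ 2 + a.imJ ^ 2 + a.imK ^ 2 = 1 := by
  rw [← Quaternion.normSq_def', Quaternion.normSq_eq_norm_mul_self, ha, one_mul]

theorem Quaternion.exists_components (r x y z : ℝ) :
    ∃ q : ℍ[ℝ], q.re = r ∧ q.imI = x ∧ q.imJ = y ∧ q.imK = z := ⟨⟨r, x, y, z⟩, rfl, rfl, rfl, rfl⟩

/-- A unit quaternion with no imaginary part is `1` or `-1`. -/
theorem Quaternion.eq_one_or_eq_neg_one {a : ℍ[ℝ]} (ha : ‖a‖ = 1) (h1 : a.imI = 0)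
    (h2 : a.imJ = 0) (h3 : a.imK = 0) : a = 1 ∨ a = -1 := by
  have h := Quaternion.sum_sq_of_norm_eq_one ha
  rw [h1, h2, h3] at h
  have : (a.re - 1) * (a.re + 1) = 0 := by linear_combination h
  rcases mul_eq_zero.1 this with h | h
  · left; ext <;> simp <;> linarith
  · right; ext <;> simp <;> linarith

/-- A unit quaternion commuting with all imaginary units is `1` or `-1`. -/
theorem Quaternion.eq_one_or_eq_neg_one_of_commute {a : ℍ[ℝ]} (ha : ‖a‖ = 1)
    (h : ∀ u : ℍ[ℝ], u * u = -1 → a * u = u * a) : a = 1 ∨ a = -1 := by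
  obtain ⟨i, i0, i1, i2, i3⟩ := Quaternion.exists_components 0 1 0 0
  obtain ⟨j, j0, j1, j2, j3⟩ := Quaternion.exists_components 0 0 1 0
  have hi := h i (by ext <;> simp [i0, i1, i2, i3])
  have hj := h j (by ext <;> simp [j0, j1, j2, j3])
  rw [Quaternion.ext_iff] at hi hj
  simp [i0, i1, i2, i3, j0, j1, j2, j3] at hi hj
  exact Quaternion.eq_one_or_eq_neg_one ha (by linarith) (by linarith) (by linarith)

/-- Every unit quaternion is conjugate to some `e^{iθ}` with `0 ≤ θ ≤ π`. -/
theorem Quaternion.exists_conj_eq_quatExpI {a : ℍ[ℝ]} (ha : ‖a‖ = 1) :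
    ∃ s : ℍ[ℝ], ‖s‖ = 1 ∧ ∃ θ, 0 ≤ θ ∧ θ ≤ Real.pi ∧ s * a * star s = quatExpI θ := by
  have h := Quaternion.sum_sq_of_norm_eq_one ha
  set θ := Real.arccos a.re with hθ
  have hcos : Real.cos θ = a.re := Real.cos_arccos (by nlinarith) (by nlinarith)
  set n := Real.sin θ with hn
  have hn2 : n ^ 2 = a.imI ^ 2 + a.imJ ^ 2 + a.imK ^ 2 := by
    rw [hn, Real.sin_sq, hcos]; linarith
  have he0 : (quatExpI θ).re = a.re := hcos
  have he1 : (quatExpI θ).imI = n := rfl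
  have he2 : (quatExpI θ).imJ = 0 := rfl
  have he3 : (quatExpI θ).imK = 0 := rfl
  obtain ⟨t, ht0, ht⟩ : ∃ t : ℍ[ℝ], t ≠ 0 ∧ t * a = quatExpI θ * t := by
    by_cases hv : a.imI + n = 0 ∧ a.imJ = 0 ∧ a.imK = 0
    · obtain ⟨j, j0, j1, j2, j3⟩ := Quaternion.exists_components 0 0 1 0
      refine ⟨j, fun h0 => by simp [h0] at j2, ?_⟩
      obtain ⟨h1, h2, h3⟩ := hv
      ext <;> simp [j0, j1, j2, j3, he0, he1, he2, he3, h2, h3]; linarith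
    · obtain ⟨t, t0, t1, t2, t3⟩ := Quaternion.exists_components 0 (a.imI + n) a.imJ a.imK
      refine ⟨t, fun h0 => hv ?_, ?_⟩
      · rw [← t1, ← t2, ← t3, h0]; simp
      · ext <;> simp [t0, t1, t2, t3, he0, he1, he2, he3] <;> linarith
  have ht' : ‖t‖ ≠ 0 := norm_ne_zero_iff.2 ht0
  have hs : ‖‖t‖⁻¹ • t‖ = 1 := by rw [norm_smul, norm_inv, norm_norm, inv_mul_cancel₀ ht']
  refine ⟨‖t‖⁻¹ • t, hs, θ, Real.arccos_nonneg _, Real.arccos_le_pi _, ?_⟩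
  rw [smul_mul_assoc, ht, ← mul_smul_comm, mul_assoc, Quaternion.mul_star_of_norm_eq_one hs,
    mul_one]

/-- The linear automorphism `x ↦ p x q` for unit quaternions `p`, `q`. -/
noncomputable def Quaternion.sandwich {p q : ℍ[ℝ]} (hp : ‖p‖ = 1) (hq : ‖q‖ = 1) :
    ℍ[ℝ] ≃ₗ[ℝ] ℍ[ℝ] where
  toFun x := p * x * q
  invFun x := star p * x * star q
  map_add' x y := by simp [mul_add, add_mul]
  map_smul' c x := by simp
  left_inv x := by
    simp only [← mul_assoc, Quaternion.star_mul_of_norm_eq_one hp, one_mul]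
    rw [mul_assoc, Quaternion.mul_star_of_norm_eq_one hq, mul_one]
  right_inv x := by
    simp only [← mul_assoc, Quaternion.mul_star_of_norm_eq_one hp, one_mul]
    rw [mul_assoc, Quaternion.star_mul_of_norm_eq_one hq, mul_one]

/-- Conjugation of quaternions as a real-linear equivalence. -/
noncomputable def Quaternion.starLinearEquiv : ℍ[ℝ] ≃ₗ[ℝ] ℍ[ℝ] where
  toFun x := star x
  invFun x := star x
  map_add' x y := star_add x y
  map_smul' c x := by simp
  left_inv x := star_star x
  right_inv x := star_star x

theorem Quaternion.starLinearEquiv_apply (x : ℍ[ℝ]) : Quaternion.starLinearEquiv x = star x := rfl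

theorem Quaternion.star_eq_neg_of_mul_self {u : ℍ[ℝ]} (hu : u * u = -1) : star u = -u := by
  have h2 : normSq u * normSq u = 1 := by rw [← map_mul, hu]; simp
  have h3 : normSq u = 1 := by nlinarith [normSq_nonneg (a := u)]
  have h4 : star u * u = 1 := by rw [Quaternion.star_mul_self, h3]; simp
  calc star u = star u * -(u * u) := by rw [hu]; simp
    _ = -(star u * u * u) := by noncomm_ring
    _ = -u := by rw [h4, one_mul]

theorem Quaternion.ne_zero_of_mul_self {u : ℍ[ℝ]} (hu : u * u = -1) : u ≠ 0 := by
  rintro rfl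
  simp at hu

theorem Quaternion.one_add_ne_zero {u : ℍ[ℝ]} (hu : u * u = -1) : 1 + u ≠ 0 := by
  intro h0
  rw [eq_neg_of_add_eq_zero_right h0] at hu
  have := congrArg QuaternionAlgebra.re hu
  simp at this
  norm_num at this

theorem Quaternion.one_sub_ne_zero {u : ℍ[ℝ]} (hu : u * u = -1) : 1 - u ≠ 0 := by
  rw [sub_eq_add_neg]
  exact Quaternion.one_add_ne_zero (by rw [neg_mul_neg, hu])

set_option maxHeartbeats 1000000 in
/-- A quaternion `a` such that `a u ā` commutes with every imaginary unit `u` is real. -/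
theorem Quaternion.im_eq_zero_of_conj_commute {a : ℍ[ℝ]}
    (h : ∀ u : ℍ[ℝ], u * u = -1 → a * u * star a * u = u * (a * u * star a)) :
    a.imI = 0 ∧ a.imJ = 0 ∧ a.imK = 0 := by
  have key (x y z : ℝ) (hxyz : x * x + y * y + z * z = 1) :
      ∃ u : ℍ[ℝ], u.re = 0 ∧ u.imI = x ∧ u.imJ = y ∧ u.imK = z ∧
        a * u * star a * u = u * (a * u * star a) := by
    obtain ⟨u, hu0, hu1, hu2, hu3⟩ := Quaternion.exists_components 0 x y z
    exact ⟨u, hu0, hu1, hu2, hu3, h u (by ext <;> simp [hu0, hu1, hu2, hu3] <;> linarith)⟩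
  obtain ⟨i, i0, i1, i2, i3, hi⟩ := key 1 0 0 (by norm_num)
  obtain ⟨j, j0, j1, j2, j3, hj⟩ := key 0 1 0 (by norm_num)
  obtain ⟨k, k0, k1, k2, k3, hk⟩ := key 0 0 1 (by norm_num)
  obtain ⟨v, v0, v1, v2, v3, hv⟩ := key (3 / 5) (4 / 5) 0 (by norm_num)
  obtain ⟨w, w0, w1, w2, w3, hw⟩ := key 0 (3 / 5) (4 / 5) (by norm_num)
  rw [Quaternion.ext_iff] at hi hj hk hv hw
  simp [i0, i1, i2, i3] at hi
  simp [j0, j1, j2, j3] at hj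
  simp [k0, k1, k2, k3] at hk
  simp [v0, v1, v2, v3] at hv
  simp [w0, w1, w2, w3] at hw
  have p12 : a.imI * a.imJ = 0 := by linarith [hi.2, hj.2]
  have p13 : a.imI * a.imK = 0 := by linarith [hi.1, hk.2]
  have p23 : a.imJ * a.imK = 0 := by linarith [hj.1, hk.1]
  have p01 : a.re * a.imI = 0 := by linarith [hj.1, hk.1]
  have p03 : a.re * a.imK = 0 := by linarith [hi.2, hj.2]
  have e12 : a.imI ^ 2 = a.imJ ^ 2 := by linarith [hv.2.2.2]
  have e23 : a.imJ ^ 2 = a.imK ^ 2 := by linarith [hw.2.1]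
  have h1 : a.imI = 0 := by
    have : (a.imI ^ 2) ^ 2 = 0 := by linear_combination a.imI ^ 2 * e12 + a.imI * a.imJ * p12
    simpa using this
  have h2 : a.imJ = 0 := by simpa [h1] using e12.symm
  exact ⟨h1, h2, by simpa [h2] using e23.symm⟩

/-- The parameters of the product `x ⊙ y = a x̄ ȳ b` when `(x², x, x²) = 0`. -/
theorem Quaternion.params_of_identity_star_star {a b : ℍ[ℝ]} (ha : ‖a‖ = 1) (hb : ‖b‖ = 1)
    (h : ∀ x : ℍ[ℝ], x ≠ 0 → a * star x * star x * (b * star a * star b) * x =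
      x * (star a * star b * a) * star x * star x * b) :
    (a = 1 ∨ a = -1) ∧ (b = 1 ∨ b = -1) := by
  set c := b * star a * star b with hc
  set d := star a * star b * a with hd
  have hac : ‖a * c‖ = 1 := by simp [hc, ha, hb]
  have h1 : a * c = d * b := by simpa using h 1 one_ne_zero
  have hm : a * c = 1 ∨ a * c = -1 :=
    Quaternion.eq_one_or_eq_neg_one_of_commute hac fun u hu => by
      have h2 := h u (Quaternion.ne_zero_of_mul_self hu)
      rw [Quaternion.star_eq_neg_of_mul_self hu, mul_assoc a, neg_mul_neg, hu,
        mul_assoc (u * d), neg_mul_neg, hu] at h2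
      have h3 : a * c * u = u * (d * b) := by simpa [mul_assoc] using h2
      rw [h3, h1]
  have hsum (u : ℍ[ℝ]) (hu : u * u = -1) :
      a * u * c = d * u * b ∧ a * u * c * u = u * (d * u * b) := by
    have e1 := h (1 + u) (Quaternion.one_add_ne_zero hu)
    have e2 := h (1 - u) (Quaternion.one_sub_ne_zero hu)
    have s1 : star (1 + u) * star (1 + u) = (-2 : ℝ) • u := by
      rw [star_add, star_one, Quaternion.star_eq_neg_of_mul_self hu, mul_add, add_mul, add_mul,
        neg_mul_neg, hu, neg_smul, two_smul]
      noncomm_ring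
    have s2 : star (1 - u) * star (1 - u) = (2 : ℝ) • u := by
      rw [star_sub, star_one, Quaternion.star_eq_neg_of_mul_self hu, sub_neg_eq_add, mul_add,
        add_mul, add_mul, hu, two_smul]
      noncomm_ring
    rw [mul_assoc a, s1, mul_assoc (_ * d), s1] at e1
    rw [mul_assoc a, s2, mul_assoc (_ * d), s2] at e2
    simp only [mul_smul_comm, smul_mul_assoc] at e1 e2
    have e1' := smul_right_injective _ (by norm_num : (-2 : ℝ) ≠ 0) e1
    have e2' := smul_right_injective _ (by norm_num : (2 : ℝ) ≠ 0) e2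
    simp only [mul_add, add_mul, mul_sub, sub_mul, mul_one, one_mul, mul_assoc] at e1' e2'
    simp only [mul_assoc]
    constructor
    · linear_combination (norm := module) (1 / 2 : ℝ) • e1' + (1 / 2 : ℝ) • e2'
    · linear_combination (norm := module) (1 / 2 : ℝ) • e1' - (1 / 2 : ℝ) • e2'
  have hcomm (u : ℍ[ℝ]) (hu : u * u = -1) : a * u * star a * u = u * (a * u * star a) := by
    obtain ⟨e1, e2⟩ := hsum u hu
    rw [← e1] at e2
    have hc' : c = star a * (a * c) := by
      rw [← mul_assoc, Quaternion.star_mul_of_norm_eq_one ha, one_mul]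
    rcases hm with hm | hm <;> rw [hm] at hc' <;> simpa [hc'] using e2
  have hareal := Quaternion.im_eq_zero_of_conj_commute hcomm
  have ha1 := Quaternion.eq_one_or_eq_neg_one ha hareal.1 hareal.2.1 hareal.2.2
  refine ⟨ha1, Quaternion.eq_one_or_eq_neg_one_of_commute hb fun u hu => ?_⟩
  have hbb := Quaternion.mul_star_of_norm_eq_one hb
  have h2 := (hsum u hu).1
  rcases ha1 with rfl | rfl
  · simp only [hc, hd, star_one, mul_one, one_mul, hbb] at h2
    conv_lhs => rw [h2, ← mul_assoc, ← mul_assoc, hbb, one_mul]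
  · simp only [hc, hd, star_one, star_neg, mul_one, one_mul, neg_mul, mul_neg, hbb, neg_neg] at h2
    conv_lhs => rw [h2, ← mul_assoc, ← mul_assoc, hbb, one_mul]

/-- The parameters of the product `x ⊙ y = a x y b` when `(x², x, x²) = 0`. -/
theorem Quaternion.params_of_identity {a b : ℍ[ℝ]} (ha : ‖a‖ = 1) (hb : ‖b‖ = 1)
    (a2 : a.imJ = 0) (a3 : a.imK = 0)
    (h : ∀ x : ℍ[ℝ], x ≠ 0 →
      a * (x * x) * b * x * b * a * (x * x) = x * x * b * a * x * a * (x * x) * b) :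
    (a = 1 ∨ a = -1) ∧ (b = 1 ∨ b = -1) := by
  have ha0 : a ≠ 0 := norm_ne_zero_iff.1 (by rw [ha]; exact one_ne_zero)
  have hb0 : b ≠ 0 := norm_ne_zero_iff.1 (by rw [hb]; exact one_ne_zero)
  have h1 : a * b * (b * a) = b * a * (a * b) := by simpa [mul_assoc] using h 1 one_ne_zero
  have h2 (u : ℍ[ℝ]) (hu : u * u = -1) : a * b * u * (b * a) = b * a * u * (a * b) := by
    have := h u (Quaternion.ne_zero_of_mul_self hu)
    rw [hu] at this
    simpa [mul_assoc] using this
  have hsum (u : ℍ[ℝ]) (hu : u * u = -1) :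
      a * u * b * b * a * u = u * b * a * a * u * b ∧
      a * u * b * u * b * a * u = u * b * a * u * a * u * b := by
    have e1 := h (1 + u) (Quaternion.one_add_ne_zero hu)
    have e2 := h (1 - u) (Quaternion.one_sub_ne_zero hu)
    have s1 : (1 + u) * (1 + u) = (2 : ℝ) • u := by
      rw [two_smul, mul_add, add_mul, add_mul, hu]; noncomm_ring
    have s2 : (1 - u) * (1 - u) = (-2 : ℝ) • u := by
      rw [neg_smul, two_smul, mul_sub, sub_mul, sub_mul, hu]; noncomm_ring
    rw [s1] at e1
    rw [s2] at e2
    simp only [mul_smul_comm, smul_mul_assoc, smul_smul] at e1 e2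
    have e1' := smul_right_injective _ (by norm_num : (2 * 2 : ℝ) ≠ 0) e1
    have e2' := smul_right_injective _ (by norm_num : (-2 * -2 : ℝ) ≠ 0) e2
    simp only [mul_add, add_mul, mul_sub, sub_mul, mul_one, mul_assoc] at e1' e2'
    simp only [mul_assoc]
    constructor
    · linear_combination (norm := module) (1 / 2 : ℝ) • e1' + (1 / 2 : ℝ) • e2'
    · linear_combination (norm := module) (1 / 2 : ℝ) • e1' - (1 / 2 : ℝ) • e2'
  have hQ : ‖b * a‖ = 1 := by simp [ha, hb]
  have hQ1 := Quaternion.mul_star_of_norm_eq_one hQ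
  have hQ2 := Quaternion.star_mul_of_norm_eq_one hQ
  have conj_eq {x y : ℍ[ℝ]} (hxy : x * (b * a) = b * a * y) :
      star (b * a) * x = y * star (b * a) := by
    calc star (b * a) * x = star (b * a) * (x * (b * a)) * star (b * a) := by
          rw [mul_assoc, mul_assoc, hQ1, mul_one]
      _ = star (b * a) * (b * a) * y * star (b * a) := by rw [hxy, ← mul_assoc]
      _ = y * star (b * a) := by rw [hQ2, one_mul]
  have ht : star (b * a) * (a * b) = 1 ∨ star (b * a) * (a * b) = -1 := by
    refine Quaternion.eq_one_or_eq_neg_one_of_commute (by simp [ha, hb]) fun u hu => ?_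
    rw [mul_assoc, conj_eq (y := u * (a * b)) (by rw [h2 u hu, mul_assoc]), mul_assoc,
      conj_eq h1]
  have hab : a * b = b * a := by
    rcases ht with ht | ht
    · calc a * b = b * a * (star (b * a) * (a * b)) := by rw [← mul_assoc, hQ1, one_mul]
        _ = b * a := by rw [ht, mul_one]
    exfalso
    have hab : a * b = -(b * a) := by
      calc a * b = b * a * (star (b * a) * (a * b)) := by rw [← mul_assoc, hQ1, one_mul]
        _ = -(b * a) := by rw [ht, mul_neg, mul_one]
    have hn := Quaternion.sum_sq_of_norm_eq_one ha
    have hn' := Quaternion.sum_sq_of_norm_eq_one hb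
    have hcomp := hab
    rw [Quaternion.ext_iff] at hcomp
    simp [a2, a3] at hcomp
    obtain ⟨r0, r1, r2, r3⟩ := hcomp
    simp only [a2, a3] at hn
    have q0 : b.re = 0 := by linear_combination a.re * r0 / 2 + a.imI * r1 / 2 - b.re * hn
    have q1 : b.imI = 0 := by linear_combination a.re * r1 / 2 - a.imI * r0 / 2 - b.imI * hn
    have p0 : a.re = 0 := by
      linear_combination b.imJ * r2 / 2 + b.imK * r3 / 2 + a.re * (b.re * q0 + b.imI * q1 - hn')
    have ha' : a * a = -1 := by ext <;> simp [p0, a2, a3]; grind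
    have hb' : b * b = -1 := by ext <;> simp [q0, q1] <;> grind
    have h3 := (hsum a ha').1
    have h4 : a * a * b * b * a * a = -1 := by simp [ha', hb']
    have h5 : a * b * a * a * a * b = 1 := by
      calc a * b * a * a * a * b = a * b * (a * a) * (a * b) := by noncomm_ring
        _ = b * a * (a * b) := by rw [ha', mul_neg_one, hab, neg_neg]
        _ = b * (a * a) * b := by noncomm_ring
        _ = 1 := by rw [ha', mul_neg_one, neg_mul, hb', neg_neg]
    rw [h4, h5] at h3
    have := congrArg QuaternionAlgebra.re h3
    simp at this
    norm_num at this
  have hba : b * a = 1 ∨ b * a = -1 := by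
    by_cases a1 : a.imI = 0
    · have ha1 := Quaternion.eq_one_or_eq_neg_one ha a1 a2 a3
      have hb1 : b = 1 ∨ b = -1 :=
        Quaternion.eq_one_or_eq_neg_one_of_commute hb fun u hu => by
          have h4 := (hsum u hu).2
          have hu0 := Quaternion.ne_zero_of_mul_self hu
          have h5 : u * b * (u * (b * u)) = u * b * (u * (u * b)) := by
            rcases ha1 with rfl | rfl <;> simpa [mul_assoc] using h4
          exact mul_left_cancel₀ hu0 (mul_left_cancel₀ (mul_ne_zero hu0 hb0) h5)
      rcases ha1 with rfl | rfl <;> rcases hb1 with rfl | rfl <;> simp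
    · have hcomp := hab
      rw [Quaternion.ext_iff] at hcomp
      simp [a2, a3] at hcomp
      have b2 : b.imJ = 0 := by
        have : a.imI * b.imJ = 0 := by linarith [hcomp.2]
        simpa [a1] using this
      have b3 : b.imK = 0 := by
        have : a.imI * b.imK = 0 := by linarith [hcomp.1]
        simpa [a1] using this
      obtain ⟨j, j0, j1, j2, j3⟩ := Quaternion.exists_components 0 0 1 0
      have h4 := (hsum j (by ext <;> simp [j0, j1, j2, j3])).2
      rw [Quaternion.ext_iff] at h4
      simp [j0, j1, j2, j3, a2, a3, b2, b3] at h4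
      have hn := Quaternion.sum_sq_of_norm_eq_one ha
      have hn' := Quaternion.sum_sq_of_norm_eq_one hb
      simp only [a2, a3] at hn
      simp only [b2, b3] at hn'
      refine Quaternion.eq_one_or_eq_neg_one hQ ?_ (by simp [a2, a3, b2, b3])
        (by simp [a2, a3, b2, b3])
      simp [a2, a3, b2, b3]
      linear_combination (a.imI * b.re - a.re * b.imI) / 2 * h4.1 -
        (a.re * b.re + a.imI * b.imI) / 2 * h4.2 -
        (b.re * a.imI + b.imI * a.re) * ((b.re ^ 2 + b.imI ^ 2) * hn + hn')
  have hm : b = star a ∨ b = -star a := by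
    have hb1 : b = b * a * star a := by
      rw [mul_assoc, Quaternion.mul_star_of_norm_eq_one ha, mul_one]
    rcases hba with hba | hba <;> rw [hba] at hb1
    · exact Or.inl (by rw [hb1, one_mul])
    · exact Or.inr (by rw [hb1, neg_one_mul])
  have hcomm (u : ℍ[ℝ]) (hu : u * u = -1) : a * u * star a * u = u * (a * u * star a) := by
    have haa := Quaternion.star_mul_of_norm_eq_one ha
    have h3 := (hsum u hu).1
    have e1 : a * u * b * b * a * u = a * u * b * (b * a) * u := by noncomm_ring
    have e2 : u * b * a * a * u * b = u * (b * a) * (a * u * b) := by noncomm_ring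
    rw [e1, e2] at h3
    rcases hm with rfl | rfl <;> simpa [haa] using h3
  have hareal := Quaternion.im_eq_zero_of_conj_commute hcomm
  have ha1 := Quaternion.eq_one_or_eq_neg_one ha hareal.1 hareal.2.1 hareal.2.2
  refine ⟨ha1, ?_⟩
  rcases ha1 with rfl | rfl <;> rcases hm with rfl | rfl <;> simp

set_option maxHeartbeats 1000000 in
/-- If `x ⊙ y = x̄ a y b` satisfies `(x², x, x²) = 0` and `a` lies in the plane of `1` and `i`,
then `a` is real. -/
theorem Quaternion.imI_eq_zero_of_identity_star {a b : ℍ[ℝ]} (a2 : a.imJ = 0) (a3 : a.imK = 0)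
    (hb : b ≠ 0)
    (h : ∀ x : ℍ[ℝ], x ≠ 0 → star x * a * x * b * a * star x * a * x =
      x * a * star x * a * star x * a * x * b) : a.imI = 0 := by
  by_contra hs
  have key (y z t : ℝ) : ∃ x : ℍ[ℝ], x.re = 1 ∧ x.imI = y ∧ x.imJ = z ∧ x.imK = t ∧
      star x * a * x * b * a * star x * a * x = x * a * star x * a * star x * a * x * b := by
    obtain ⟨x, x0, x1, x2, x3⟩ := Quaternion.exists_components 1 y z t
    exact ⟨x, x0, x1, x2, x3, h x fun hx => by simp [hx] at x0⟩
  obtain ⟨y, y0, y1, y2, y3, hy⟩ := key 0 1 0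
  obtain ⟨z, z0, z1, z2, z3, hz⟩ := key 0 (-1) 0
  obtain ⟨u, u0, u1, u2, u3, hu⟩ := key 0 0 1
  obtain ⟨v, v0, v1, v2, v3, hv⟩ := key 0 0 (-1)
  obtain ⟨w, w0, w1, w2, w3, hw⟩ := key 1 1 0
  rw [Quaternion.ext_iff] at hy hz hu hv hw
  simp [y0, y1, y2, y3, a2, a3] at hy
  simp [z0, z1, z2, z3, a2, a3] at hz
  simp [u0, u1, u2, u3, a2, a3] at hu
  simp [v0, v1, v2, v3, a2, a3] at hv
  simp [w0, w1, w2, w3, a2, a3] at hw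
  have hs3 {t : ℝ} (ht : a.imI ^ 3 * t = 0) : t = 0 :=
    (mul_eq_zero.1 ht).resolve_left (pow_ne_zero 3 hs)
  have b0 : b.re = 0 := hs3 (by linarith [hy.2.1, hz.2.1])
  simp only [b0] at hy hz hu hv hw
  have c1 : a.re ^ 2 * a.imI * b.imK = 0 := by linarith [hy.1, hz.1]
  have c2 : a.re * a.imI ^ 2 * b.imK = 0 := by linarith [hy.2.1, hz.2.1]
  have c3 : a.re ^ 2 * a.imI * b.imJ = 0 := by linarith [hu.1, hv.1]
  have c4 : a.re * a.imI ^ 2 * b.imJ = 0 := by linarith [hu.2.1, hv.2.1]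
  have c5 : a.re * a.imI ^ 2 * b.imI = 0 := by linarith [hy.2.2.2, hz.2.2.2]
  have b2 : b.imJ = 0 := hs3 (by linarith [hy.2.2.2, hz.2.2.2])
  have b3 : b.imK = 0 := hs3 (by linarith [hu.2.2.1, hv.2.2.1])
  have b1 : b.imI = 0 := hs3 (by simp only [b2, b3] at hw; linarith [hw.1])
  exact hb (by ext <;> simp [b0, b1, b2, b3])

theorem Quaternion.mul_star_cancel_left {a : ℍ[ℝ]} (ha : ‖a‖ = 1) (x : ℍ[ℝ]) :
    a * (star a * x) = x := by
  rw [← mul_assoc, Quaternion.mul_star_of_norm_eq_one ha, one_mul]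

theorem Quaternion.star_mul_cancel_left {a : ℍ[ℝ]} (ha : ‖a‖ = 1) (x : ℍ[ℝ]) :
    star a * (a * x) = x := by
  rw [← mul_assoc, Quaternion.star_mul_of_norm_eq_one ha, one_mul]

theorem Quaternion.ne_zero_of_norm_eq_one {a : ℍ[ℝ]} (ha : ‖a‖ = 1) : a ≠ 0 :=
  norm_ne_zero_iff.1 (by rw [ha]; exact one_ne_zero)

section Classification

variable {A : Type*} [AddCommGroup A] [Module ℝ A] {mul : A →ₗ[ℝ] A →ₗ[ℝ] A}

/-- An isotope `p x q y r` of the quaternions with `(x², x, x²) = 0` is isomorphic to `ℍ`. -/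
theorem exists_equiv_quaternion
    (hid : ∀ x, mul (mul (mul x x) x) (mul x x) = mul (mul x x) (mul x (mul x x)))
    {p q r : ℍ[ℝ]} (hp : ‖p‖ = 1) (hq : ‖q‖ = 1) (hr : ‖r‖ = 1) (e : A ≃ₗ[ℝ] ℍ[ℝ])
    (he : ∀ x y, e (mul x y) = p * e x * q * e y * r) :
    ∃ e : A ≃ₗ[ℝ] ℍ[ℝ], ∀ x y, e (mul x y) = e x * e y := by
  obtain ⟨s, hs, θ, -, -, hθ⟩ := Quaternion.exists_conj_eq_quatExpI hp
  have hs' : ‖star s‖ = 1 := by rw [norm_star, hs]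
  have hqs : ‖q * star s‖ = 1 := by rw [norm_mul, hq, hs', one_mul]
  set a := s * p * star s with ha
  set b := s * star q * r * q * star s with hb
  have ha1 : ‖a‖ = 1 := by simp [ha, hs, hp]
  have hb1 : ‖b‖ = 1 := by simp [hb, hs, hq, hr]
  obtain ⟨E, hE⟩ : ∃ E : A ≃ₗ[ℝ] ℍ[ℝ], ∀ x, E x = s * e x * (q * star s) :=
    ⟨e.trans (Quaternion.sandwich hs hqs), fun _ => rfl⟩
  have hmul (x y : A) : E (mul x y) = a * E x * E y * b := by
    simp only [hE, he, ha, hb, mul_assoc, Quaternion.star_mul_cancel_left hs,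
      Quaternion.mul_star_cancel_left hq]
  have ha0 := Quaternion.ne_zero_of_norm_eq_one ha1
  have hb0 := Quaternion.ne_zero_of_norm_eq_one hb1
  have key := Quaternion.params_of_identity ha1 hb1 (by rw [hθ]; rfl) (by rw [hθ]; rfl)
    fun x _ => by
      have h := congrArg E (hid (E.symm x))
      simp only [hmul, LinearEquiv.apply_symm_apply] at h
      refine mul_left_cancel₀ (mul_ne_zero ha0 ha0) (mul_right_cancel₀ (mul_ne_zero hb0 hb0) ?_)
      simpa only [mul_assoc] using h
  have hsign : (∀ x y, E (mul x y) = E x * E y) ∨ ∀ x y, E (mul x y) = -(E x * E y) := by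
    rcases key.1 with h1 | h1 <;> rcases key.2 with h2 | h2 <;> simp [hmul, h1, h2]
  rcases hsign with h | h
  · exact ⟨E, h⟩
  · exact ⟨E.trans (LinearEquiv.neg ℝ), fun x y => by simp [h]⟩

/-- An isotope `p x̄ q ȳ r` of the quaternions with `(x², x, x²) = 0` is isomorphic to `⁎ℍ`. -/
theorem exists_equiv_star_star
    (hid : ∀ x, mul (mul (mul x x) x) (mul x x) = mul (mul x x) (mul x (mul x x)))
    {p q r : ℍ[ℝ]} (hp : ‖p‖ = 1) (hq : ‖q‖ = 1) (hr : ‖r‖ = 1) (e : A ≃ₗ[ℝ] ℍ[ℝ])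
    (he : ∀ x y, e (mul x y) = p * star (e x) * q * star (e y) * r) :
    ∃ e : A ≃ₗ[ℝ] ℍ[ℝ], ∀ x y, e (mul x y) = star (e x) * star (e y) := by
  have hq' : ‖star q‖ = 1 := by rw [norm_star, hq]
  set a := star q * p with ha
  set b := star q * r with hb
  have ha1 : ‖a‖ = 1 := by simp [ha, hp, hq]
  have hb1 : ‖b‖ = 1 := by simp [hb, hq, hr]
  obtain ⟨E, hE⟩ : ∃ E : A ≃ₗ[ℝ] ℍ[ℝ], ∀ x, E x = star q * e x * 1 :=
    ⟨e.trans (Quaternion.sandwich hq' norm_one), fun _ => rfl⟩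
  have hmul (x y : A) : E (mul x y) = a * star (E x) * star (E y) * b := by
    simp only [hE, he, ha, hb, mul_one, star_mul, star_star, mul_assoc,
      Quaternion.mul_star_cancel_left hq]
  have ha0 := Quaternion.ne_zero_of_norm_eq_one ha1
  have hb0 := Quaternion.ne_zero_of_norm_eq_one hb1
  have key := Quaternion.params_of_identity_star_star ha1 hb1 fun x hx => by
    have h := congrArg E (hid (E.symm x))
    simp only [hmul, LinearEquiv.apply_symm_apply, star_mul, star_star] at h
    refine mul_left_cancel₀ (mul_ne_zero (mul_ne_zero ha0 (star_ne_zero.2 hb0)) hx)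
      (mul_right_cancel₀ (mul_ne_zero hx (mul_ne_zero (star_ne_zero.2 ha0) hb0)) ?_)
    simpa only [mul_assoc] using h
  have hsign : (∀ x y, E (mul x y) = star (E x) * star (E y)) ∨
      ∀ x y, E (mul x y) = -(star (E x) * star (E y)) := by
    rcases key.1 with h1 | h1 <;> rcases key.2 with h2 | h2 <;> simp [hmul, h1, h2]
  rcases hsign with h | h
  · exact ⟨E, h⟩
  · exact ⟨E.trans (LinearEquiv.neg ℝ), fun x y => by simp [h]⟩

/-- An isotope `p x̄ q y r` of the quaternions with `(x², x, x²) = 0` is isomorphic to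
some `*ℍ(1, e^{iα})`. -/
theorem exists_equiv_star_left
    (hid : ∀ x, mul (mul (mul x x) x) (mul x x) = mul (mul x x) (mul x (mul x x)))
    {p q r : ℍ[ℝ]} (hp : ‖p‖ = 1) (hq : ‖q‖ = 1) (hr : ‖r‖ = 1) (e : A ≃ₗ[ℝ] ℍ[ℝ])
    (he : ∀ x y, e (mul x y) = p * star (e x) * q * e y * r) :
    ∃ α : ℝ, 0 ≤ α ∧ α < Real.pi ∧ ∃ e : A ≃ₗ[ℝ] ℍ[ℝ],
      ∀ x y, e (mul x y) = star (e x) * e y * quatExpI α := by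
  have hp' : ‖star p‖ = 1 := by rw [norm_star, hp]
  have hpqp : ‖star p * q * p‖ = 1 := by simp [hp, hq]
  obtain ⟨s, hs, θ, -, -, hθ⟩ := Quaternion.exists_conj_eq_quatExpI hpqp
  have hs' : ‖star s‖ = 1 := by rw [norm_star, hs]
  have hsp : ‖s * star p‖ = 1 := by rw [norm_mul, hs, hp', one_mul]
  set a := s * (star p * q * p) * star s with ha
  set b := s * r * star s with hb
  have ha1 : ‖a‖ = 1 := by simp [ha, hs, hp, hq]
  have hb1 : ‖b‖ = 1 := by simp [hb, hs, hr]
  obtain ⟨E, hE⟩ : ∃ E : A ≃ₗ[ℝ] ℍ[ℝ], ∀ x, E x = s * star p * e x * star s :=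
    ⟨e.trans (Quaternion.sandwich hsp hs'), fun _ => rfl⟩
  have hmul (x y : A) : E (mul x y) = star (E x) * a * E y * b := by
    simp only [hE, he, ha, hb, star_mul, star_star, mul_assoc,
      Quaternion.star_mul_cancel_left hs, Quaternion.star_mul_cancel_left hp,
      Quaternion.mul_star_cancel_left hp]
  have ha0 := Quaternion.ne_zero_of_norm_eq_one ha1
  have hb0 := Quaternion.ne_zero_of_norm_eq_one hb1
  have hre : a = 1 ∨ a = -1 := by
    have h2 : a.imJ = 0 := by rw [hθ]; rfl
    have h3 : a.imK = 0 := by rw [hθ]; rfl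
    refine Quaternion.eq_one_or_eq_neg_one ha1
      (Quaternion.imI_eq_zero_of_identity_star h2 h3 hb0 fun x hx => ?_) h2 h3
    have h := congrArg E (hid (E.symm x))
    simp only [hmul, LinearEquiv.apply_symm_apply, star_mul, star_star] at h
    refine mul_left_cancel₀ (mul_ne_zero (star_ne_zero.2 hb0)
      (mul_ne_zero (star_ne_zero.2 hx) (star_ne_zero.2 ha0)))
      (mul_right_cancel₀ (mul_ne_zero hb0 hb0) ?_)
    simpa only [mul_assoc] using h
  obtain ⟨c, hc, hmul'⟩ : ∃ c : ℍ[ℝ], ‖c‖ = 1 ∧ ∀ x y, E (mul x y) = star (E x) * E y * c := by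
    rcases hre with h1 | h1
    · exact ⟨b, hb1, fun x y => by rw [hmul, h1, mul_one]⟩
    · exact ⟨-b, by rw [norm_neg, hb1], fun x y => by rw [hmul, h1]; noncomm_ring⟩
  obtain ⟨t, ht, α, h0, hπ, hα⟩ := Quaternion.exists_conj_eq_quatExpI hc
  have ht' : ‖star t‖ = 1 := by rw [norm_star, ht]
  obtain ⟨F, hF⟩ : ∃ F : A ≃ₗ[ℝ] ℍ[ℝ], ∀ x, F x = t * E x * star t :=
    ⟨E.trans (Quaternion.sandwich ht ht'), fun _ => rfl⟩
  have hFmul (x y : A) : F (mul x y) = star (F x) * F y * quatExpI α := by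
    simp only [← hα, hF, hmul', star_mul, star_star, mul_assoc,
      Quaternion.star_mul_cancel_left ht]
  rcases hπ.lt_or_eq with hπ | rfl
  · exact ⟨α, h0, hπ, F, hFmul⟩
  · have hexp : quatExpI Real.pi = -1 := by ext <;> simp [quatExpI]
    have hexp' : quatExpI 0 = 1 := by ext <;> simp [quatExpI]
    refine ⟨0, le_rfl, Real.pi_pos, F.trans (LinearEquiv.neg ℝ), fun x y => ?_⟩
    simp [hFmul, hexp, hexp']

/-- An isotope `p x q ȳ r` of the quaternions with `(x², x, x²) = 0` is isomorphic to
some `ℍ*(e^{iα}, 1)`. -/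
theorem exists_equiv_star_right
    (hid : ∀ x, mul (mul (mul x x) x) (mul x x) = mul (mul x x) (mul x (mul x x)))
    {p q r : ℍ[ℝ]} (hp : ‖p‖ = 1) (hq : ‖q‖ = 1) (hr : ‖r‖ = 1) (e : A ≃ₗ[ℝ] ℍ[ℝ])
    (he : ∀ x y, e (mul x y) = p * e x * q * star (e y) * r) :
    ∃ α : ℝ, 0 ≤ α ∧ α < Real.pi ∧ ∃ e : A ≃ₗ[ℝ] ℍ[ℝ],
      ∀ x y, e (mul x y) = quatExpI α * e x * star (e y) := by
  obtain ⟨α, h0, hπ, E, hE⟩ := exists_equiv_star_left (mul := mul.flip)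
    (p := star r) (q := star q) (r := star p) (fun x => (hid x).symm) (by rw [norm_star, hr])
    (by rw [norm_star, hq]) (by rw [norm_star, hp]) (e.trans Quaternion.starLinearEquiv)
    (fun x y => by
      simp only [LinearEquiv.trans_apply, Quaternion.starLinearEquiv_apply, LinearMap.flip_apply,
        he, star_mul, star_star, mul_assoc])
  obtain ⟨j, j0, j1, j2, j3⟩ := Quaternion.exists_components 0 0 1 0
  have hj : ‖j‖ = 1 := by
    have h : ‖j‖ * ‖j‖ = 1 := by
      rw [← Quaternion.normSq_eq_norm_mul_self, Quaternion.normSq_def']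
      simp [j0, j1, j2, j3]
    nlinarith [norm_nonneg j]
  have hj' : ‖star j‖ = 1 := by rw [norm_star, hj]
  have hexp : j * star (quatExpI α) * star j = quatExpI α := by
    have e0 : (quatExpI α).imJ = 0 := rfl
    have e1 : (quatExpI α).imK = 0 := rfl
    ext <;> simp [j0, j1, j2, j3, e0, e1]
  obtain ⟨F, hF⟩ : ∃ F : A ≃ₗ[ℝ] ℍ[ℝ], ∀ x, F x = j * star (E x) * star j :=
    ⟨(E.trans Quaternion.starLinearEquiv).trans (Quaternion.sandwich hj hj'), fun _ => rfl⟩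
  refine ⟨α, h0, hπ, F, fun x y => ?_⟩
  have h := hE y x
  rw [LinearMap.flip_apply] at h
  conv_rhs => rw [← hexp]
  simp only [hF, h, star_mul, star_star, mul_assoc, Quaternion.star_mul_cancel_left hj]

/-- The algebras `ℍ`, `⁎ℍ`, `*ℍ(1, b)` and `ℍ*(b, 1)` satisfy `(x², x, x²) = 0`. -/
theorem identity_of_equiv (e : A ≃ₗ[ℝ] ℍ[ℝ])
    (he : (∀ x y, e (mul x y) = e x * e y) ∨ (∀ x y, e (mul x y) = star (e x) * star (e y)) ∨
      ∃ b : ℍ[ℝ], (∀ x y, e (mul x y) = star (e x) * e y * b) ∨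
        ∀ x y, e (mul x y) = b * e x * star (e y)) (x : A) :
    mul (mul (mul x x) x) (mul x x) = mul (mul x x) (mul x (mul x x)) := by
  apply e.injective
  have h1 : star (e x) * e x = normSq (e x) • (1 : ℍ[ℝ]) := by
    rw [Quaternion.star_mul_self, ← Quaternion.coe_mul_eq_smul, mul_one]
  have h2 : e x * star (e x) = normSq (e x) • (1 : ℍ[ℝ]) := by
    rw [Quaternion.self_mul_star, ← Quaternion.coe_mul_eq_smul, mul_one]
  have h3 (y : ℍ[ℝ]) : star (e x) * (e x * y) = normSq (e x) • y := by
    rw [← mul_assoc, h1, smul_one_mul]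
  rcases he with he | he | ⟨b, he | he⟩
  · simp only [he, mul_assoc]
  all_goals
    simp only [he, star_mul, star_star, mul_assoc, h1, h2, h3, mul_smul_comm, smul_mul_assoc,
      mul_one, one_mul, Quaternion.star_smul]

end Classification

end QuaternionIsotopes

/-- A 4-dimensional absolute-valued real algebra satisfies the identity `(x², x, x²) = 0`
if and only if it is isomorphic to `ℍ`, to `⁎ℍ` (product `x ⊙ y = x̄ * ȳ`), or, for some
`α ∈ [0, π)`, to `*ℍ(1, e^{iα})` (product `x ⊙ y = x̄ * y * e^{iα}`) or to
`ℍ*(e^{iα}, 1)` (product `x ⊙ y = e^{iα} * x * ȳ`). -/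
theorem stmt_19 {A : Type*} [NormedAddCommGroup A] [NormedSpace ℝ A]
    (mul : A →ₗ[ℝ] A →ₗ[ℝ] A)
    (habs : ∀ x y : A, ‖mul x y‖ = ‖x‖ * ‖y‖)
    (hdim : Module.finrank ℝ A = 4) :
    (∀ x : A, mul (mul (mul x x) x) (mul x x) = mul (mul x x) (mul x (mul x x)))
      ↔ ((∃ e : A ≃ₗ[ℝ] Quaternion ℝ, ∀ x y : A, e (mul x y) = e x * e y) ∨
          (∃ e : A ≃ₗ[ℝ] Quaternion ℝ,
            ∀ x y : A, e (mul x y) = star (e x) * star (e y)) ∨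
          (∃ α : ℝ, 0 ≤ α ∧ α < Real.pi ∧
            ((∃ e : A ≃ₗ[ℝ] Quaternion ℝ,
                ∀ x y : A, e (mul x y) = star (e x) * e y * quatExpI α) ∨
             (∃ e : A ≃ₗ[ℝ] Quaternion ℝ,
                ∀ x y : A, e (mul x y) = quatExpI α * e x * star (e y))))) := by
  constructor
  · intro hid
    have : FiniteDimensional ℝ A := Module.finite_of_finrank_pos (by omega)
    let : InnerProductSpace ℝ A :=
      InnerProductSpace.ofNorm ℝ (parallelogram_of_absolute_value mul habs)
    obtain ⟨φ, f, g, hφ⟩ := exists_isotopy_quaternion_of_norm_mul (m := mul) habs hdim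
    obtain ⟨p, q, hp, hq, hf⟩ := Quaternion.linearIsometryEquiv_eq f
    obtain ⟨p', q', hp', hq', hg⟩ := Quaternion.linearIsometryEquiv_eq g
    have hqp : ‖q * p'‖ = 1 := by rw [norm_mul, hq, hp', one_mul]
    have hmul (x y : A) : φ.toLinearEquiv (mul x y) = f (φ x) * g (φ y) := hφ x y
    rcases hf with hf | hf <;> rcases hg with hg | hg <;> simp only [hf, hg] at hmul
    · exact Or.inl (exists_equiv_quaternion hid hp hqp hq' φ.toLinearEquiv
        fun x y => by simp [hmul, mul_assoc])
    · obtain ⟨α, h0, hπ, h⟩ := exists_equiv_star_right hid hp hqp hq' φ.toLinearEquiv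
        fun x y => by simp [hmul, mul_assoc]
      exact Or.inr (Or.inr ⟨α, h0, hπ, Or.inr h⟩)
    · obtain ⟨α, h0, hπ, h⟩ := exists_equiv_star_left hid hp hqp hq' φ.toLinearEquiv
        fun x y => by simp [hmul, mul_assoc]
      exact Or.inr (Or.inr ⟨α, h0, hπ, Or.inl h⟩)
    · exact Or.inr (Or.inl (exists_equiv_star_star hid hp hqp hq' φ.toLinearEquiv
        fun x y => by simp [hmul, mul_assoc]))
  · rintro (⟨e, he⟩ | ⟨e, he⟩ | ⟨α, -, -, ⟨e, he⟩ | ⟨e, he⟩⟩)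
    · exact identity_of_equiv e (Or.inl he)
    · exact identity_of_equiv e (Or.inr (Or.inl he))
    · exact identity_of_equiv e (Or.inr (Or.inr ⟨_, Or.inl he⟩))
    · exact identity_of_equiv e (Or.inr (Or.inr ⟨_, Or.inr he⟩))
end
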